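/- arXiv:0902.3710 — 6 statements merged into one kernel-verified Lean document; each statement's English description precedes it below -/
import Mathlib

section
/- (Lemma 1) Let N ≥ 4 and let q^e = (x^e, y^e) be a placement with pairwise distinct node positions. Suppose the stress matrix Ω of the symmetric stresses ω_ij is positive semidefinite, and the edge parameters satisfy α_ij ω_ij l_ij ≥ 0 for all i ≠ j. Then the second-variation matrix δ²Ṽ(q^e) = [[Ω + L_c^x, L_c^{xy}],[L_c^{xy}, Ω + L_c^y]], with coefficients c_ij = α_ij ω_ij l_ij / (r^e_ij)³, is positive semidefinite. -/
open Finset Matrix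

/-- The stress matrix of symmetric stresses `ω`: off-diagonal entries `-ω i j`,
diagonal entries `∑_{k ≠ i} ω i k`. -/
noncomputable def stressMatrix {N : ℕ} (ω : Fin N → Fin N → ℝ) : Matrix (Fin N) (Fin N) ℝ :=
  Matrix.of fun i j => if i = j then ∑ k ∈ Finset.univ.erase i, ω i k else -ω i j

/-- The `L`-matrix built from coefficients `c` and edge quantities `g`: off-diagonal
entries `-c i j * g i j`, diagonal entries `∑_{k ≠ i} c i k * g i k`. -/
noncomputable def Lmat {N : ℕ} (c g : Fin N → Fin N → ℝ) : Matrix (Fin N) (Fin N) ℝ :=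
  Matrix.of fun i j =>
    if i = j then ∑ k ∈ Finset.univ.erase i, c i k * g i k else -(c i j * g i j)

lemma Lmat_mulVec {N : ℕ} (c g : Fin N → Fin N → ℝ) (v : Fin N → ℝ) (i : Fin N) :
    (Lmat c g *ᵥ v) i = ∑ j, c i j * g i j * (v i - v j) := by
  rw [Matrix.mulVec, dotProduct, ← Finset.add_sum_erase _ _ (Finset.mem_univ i),
    ← Finset.add_sum_erase Finset.univ (fun j => c i j * g i j * (v i - v j)) (Finset.mem_univ i)]
  simp only [Lmat, Matrix.of_apply, if_true, sub_self, mul_zero, zero_add, Finset.sum_mul,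
    ← Finset.sum_add_distrib]
  refine Finset.sum_congr rfl fun j hj => ?_
  rw [if_neg (Finset.ne_of_mem_erase hj).symm]
  ring

lemma Lmat_form {N : ℕ} (c g : Fin N → Fin N → ℝ) (hc : ∀ i j, c i j = c j i)
    (hg : ∀ i j, g i j = g j i) (u v : Fin N → ℝ) :
    u ⬝ᵥ (Lmat c g *ᵥ v) = (1 / 2) * ∑ i, ∑ j, c i j * g i j * (u i - u j) * (v i - v j) := by
  have h1 : u ⬝ᵥ (Lmat c g *ᵥ v) = ∑ i, ∑ j, u i * (c i j * g i j * (v i - v j)) := by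
    simp only [dotProduct, Lmat_mulVec, Finset.mul_sum]
  have h2 : u ⬝ᵥ (Lmat c g *ᵥ v) = ∑ i, ∑ j, u j * (c i j * g i j * (v j - v i)) := by
    rw [h1, Finset.sum_comm]
    refine Finset.sum_congr rfl fun i _ => Finset.sum_congr rfl fun j _ => ?_
    rw [hc j i, hg j i]
  have h3 : ∑ i, ∑ j, c i j * g i j * (u i - u j) * (v i - v j)
      = u ⬝ᵥ (Lmat c g *ᵥ v) + u ⬝ᵥ (Lmat c g *ᵥ v) := by
    nth_rewrite 1 [h1]
    rw [h2, ← Finset.sum_add_distrib]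
    refine Finset.sum_congr rfl fun i _ => ?_
    rw [← Finset.sum_add_distrib]
    refine Finset.sum_congr rfl fun j _ => ?_
    ring
  rw [h3]; ring

lemma Lmat_herm {N : ℕ} (c g : Fin N → Fin N → ℝ) (hc : ∀ i j, c i j = c j i)
    (hg : ∀ i j, g i j = g j i) : (Lmat c g).IsHermitian := by
  ext i j
  simp only [Matrix.conjTranspose_apply, Lmat, Matrix.of_apply, star_trivial]
  by_cases h : i = j
  · subst h; rfl
  · rw [if_neg h, if_neg (Ne.symm h), hc j i, hg j i]

/-- Lemma 1: if the stress matrix `Ω` is positive semidefinite and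
`α_ij ω_ij l_ij ≥ 0` for all `i ≠ j`, then the second-variation matrix
`δ²Ṽ(q^e) = [[Ω + L_c^x, L_c^xy],[L_c^xy, Ω + L_c^y]]`, with coefficients
`c_ij = α_ij ω_ij l_ij / (r^e_ij)³`, is positive semidefinite. -/
theorem second_variation_posSemidef
    {N : ℕ} (hN : 4 ≤ N) (x y : Fin N → ℝ)
    (hdist : ∀ i j : Fin N, i ≠ j → (x i, y i) ≠ (x j, y j))
    (ω α l : Fin N → Fin N → ℝ)
    (hωs : ∀ i j, ω i j = ω j i) (hαs : ∀ i j, α i j = α j i) (hls : ∀ i j, l i j = l j i)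
    (hωd : ∀ i, ω i i = 0)
    (hΩ : (stressMatrix ω).PosSemidef)
    (hαωl : ∀ i j, i ≠ j → 0 ≤ α i j * ω i j * l i j)
    (r : Fin N → Fin N → ℝ)
    (hr : ∀ i j, r i j = Real.sqrt ((x i - x j) ^ 2 + (y i - y j) ^ 2))
    (c : Fin N → Fin N → ℝ)
    (hcdef : ∀ i j, c i j = α i j * ω i j * l i j / (r i j) ^ 3) :
    (Matrix.fromBlocks
      (stressMatrix ω + Lmat c (fun i j => (x i - x j) ^ 2))
      (Lmat c (fun i j => (x i - x j) * (y i - y j)))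
      (Lmat c (fun i j => (x i - x j) * (y i - y j)))
      (stressMatrix ω + Lmat c (fun i j => (y i - y j) ^ 2))).PosSemidef := by
  have hc : ∀ i j, c i j = c j i := fun i j => by
    rw [hcdef, hcdef, hr, hr, hωs i j, hαs i j, hls i j, ← neg_sub (x j), ← neg_sub (y j),
      neg_sq, neg_sq]
  have hc0 : ∀ i j, i ≠ j → 0 ≤ c i j := fun i j h => by
    rw [hcdef]
    refine div_nonneg (hαωl i j h) (pow_nonneg ?_ 3)
    rw [hr]; exact Real.sqrt_nonneg _
  have g1 : ∀ i j, (fun i j => (x i - x j) ^ 2) i j = (fun i j => (x i - x j) ^ 2) j i := 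
    fun i j => by ring
  have g2 : ∀ i j, (fun i j => (y i - y j) ^ 2) i j = (fun i j => (y i - y j) ^ 2) j i := 
    fun i j => by ring
  have g3 : ∀ i j, (fun i j => (x i - x j) * (y i - y j)) i j
      = (fun i j => (x i - x j) * (y i - y j)) j i := fun i j => by ring
  refine Matrix.PosSemidef.of_dotProduct_mulVec_nonneg ?_ ?_
  · exact Matrix.IsHermitian.fromBlocks (hΩ.1.add (Lmat_herm _ _ hc g1)) (Lmat_herm _ _ hc g3)
      (hΩ.1.add (Lmat_herm _ _ hc g2))
  · intro z
    obtain ⟨u, v, rfl⟩ : ∃ u v : Fin N → ℝ, z = Sum.elim u v :=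
      ⟨z ∘ Sum.inl, z ∘ Sum.inr, by simp⟩
    have hu := hΩ.dotProduct_mulVec_nonneg u
    have hv := hΩ.dotProduct_mulVec_nonneg v
    rw [star_trivial] at hu hv ⊢
    rw [Matrix.fromBlocks_mulVec, sumElim_dotProduct_sumElim]
    simp only [Sum.elim_comp_inl, Sum.elim_comp_inr, Matrix.add_mulVec, dotProduct_add]
    rw [Lmat_form _ _ hc g1, Lmat_form _ _ hc g2, Lmat_form _ _ hc g3, Lmat_form _ _ hc g3]
    have key : 0 ≤ ∑ i, ∑ j, c i j * ((x i - x j) * (u i - u j) + (y i - y j) * (v i - v j)) ^ 2 := by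
      refine Finset.sum_nonneg fun i _ => Finset.sum_nonneg fun j _ => ?_
      by_cases h : i = j
      · subst h; simp
      · exact mul_nonneg (hc0 i j h) (sq_nonneg _)
    have e : ∑ i, ∑ j, c i j * ((x i - x j) * (u i - u j) + (y i - y j) * (v i - v j)) ^ 2
        = ∑ i, ∑ j, c i j * (x i - x j) ^ 2 * (u i - u j) * (u i - u j)
        + ∑ i, ∑ j, c i j * ((x i - x j) * (y i - y j)) * (u i - u j) * (v i - v j)
        + ∑ i, ∑ j, c i j * ((x i - x j) * (y i - y j)) * (v i - v j) * (u i - u j)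
        + ∑ i, ∑ j, c i j * (y i - y j) ^ 2 * (v i - v j) * (v i - v j) := by
      simp only [← Finset.sum_add_distrib]
      refine Finset.sum_congr rfl fun i _ => Finset.sum_congr rfl fun j _ => ?_
      ring
    linarith
end

section
/- (Lemma 2) Let N ≥ 4 and let q^e = (x^e, y^e) be a placement with pairwise distinct node positions such that x^e, y^e, 1 are linearly independent. Suppose the stress matrix Ω is positive semidefinite with kernel exactly span{x^e, y^e, 1}, the coefficients c_ij = α_ij ω_ij l_ij / (r^e_ij)³ satisfy c_ij > 0 whenever ω_ij ≠ 0 and c_ij = 0 whenever ω_ij = 0, and the rank-one matrices (q^e_i − q^e_j)(q^e_i − q^e_j)ᵀ over the edges {i,j} with ω_ij ≠ 0 span the 3-dimensional space of symmetric 2×2 real matrices. Then the kernel of the second-variation matrix δ²Ṽ(q^e) = [[Ω + L_c^x, L_c^{xy}],[L_c^{xy}, Ω + L_c^y]] is exactly span{(1, 0), (0, 1), (−y^e, x^e)} ⊂ ℝ^N × ℝ^N. -/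
open Finset Matrix

theorem Lmat_mulVec_aux {N : ℕ} (c g : Fin N → Fin N → ℝ) (u : Fin N → ℝ) (i : Fin N) :
    (Lmat c g *ᵥ u) i = ∑ k, c i k * g i k * (u i - u k) := by
  have h : ∀ f : Fin N → ℝ, ∑ k, f k = f i + ∑ k ∈ Finset.univ.erase i, f k := fun f =>
    (Finset.add_sum_erase _ f (Finset.mem_univ i)).symm
  simp only [Matrix.mulVec, dotProduct, Lmat, Matrix.of_apply]
  rw [h, h]
  simp only [if_true, sub_self, mul_zero, zero_add]
  rw [Finset.sum_mul, ← Finset.sum_add_distrib]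
  refine Finset.sum_congr rfl fun k hk => ?_
  rw [if_neg (Finset.ne_of_mem_erase hk).symm]
  ring

theorem quad_aux {N : ℕ} (c s dx dy : Fin N → Fin N → ℝ) (a b : Fin N → ℝ)
    (hc : ∀ i j, c i j = c j i) (hs : ∀ i j, s i j = s j i)
    (hx : ∀ i j, dx i j = - dx j i) (hy : ∀ i j, dy i j = - dy j i)
    (h : ∀ i j, s i j = dx i j * (a i - a j) + dy i j * (b i - b j)) :
    2 * ∑ i, ∑ k, c i k * s i k * (dx i k * a i + dy i k * b i)
      = ∑ i, ∑ k, c i k * s i k ^ 2 := by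
  have h1 : ∑ i, ∑ k, c i k * s i k * (dx i k * a i + dy i k * b i)
      = - ∑ i, ∑ k, c i k * s i k * (dx i k * a k + dy i k * b k) := by
    rw [Finset.sum_comm]
    simp only [← Finset.sum_neg_distrib]
    refine Finset.sum_congr rfl fun i _ => Finset.sum_congr rfl fun k _ => ?_
    rw [hc k i, hs k i, hx k i, hy k i]; ring
  rw [two_mul]
  nth_rw 2 [h1]
  simp only [← Finset.sum_neg_distrib, ← Finset.sum_add_distrib]
  refine Finset.sum_congr rfl fun i _ => Finset.sum_congr rfl fun k _ => ?_
  rw [pow_two]; nth_rw 4 [h i k]; ring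

/-- Lemma 2: under the stated hypotheses, the kernel of the
second-variation matrix `δ²Ṽ(q^e) = [[Ω + L_c^x, L_c^xy],[L_c^xy, Ω + L_c^y]]` is exactly
`span{(1,0), (0,1), (−y^e, x^e)}`. -/
theorem second_variation_kernel
    {N : ℕ} (hN : 4 ≤ N) (x y : Fin N → ℝ)
    (hdist : ∀ i j : Fin N, i ≠ j → (x i, y i) ≠ (x j, y j))
    (hli : LinearIndependent ℝ ![x, y, (1 : Fin N → ℝ)])
    (ω α l : Fin N → Fin N → ℝ)
    (hωs : ∀ i j, ω i j = ω j i) (hαs : ∀ i j, α i j = α j i) (hls : ∀ i j, l i j = l j i)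
    (hωd : ∀ i, ω i i = 0)
    (hΩ : (stressMatrix ω).PosSemidef)
    (hker : ∀ u : Fin N → ℝ, (stressMatrix ω) *ᵥ u = 0 ↔
        u ∈ Submodule.span ℝ ({x, y, (1 : Fin N → ℝ)} : Set (Fin N → ℝ)))
    (r : Fin N → Fin N → ℝ)
    (hr : ∀ i j, r i j = Real.sqrt ((x i - x j) ^ 2 + (y i - y j) ^ 2))
    (c : Fin N → Fin N → ℝ)
    (hcdef : ∀ i j, c i j = α i j * ω i j * l i j / (r i j) ^ 3)
    (hcpos : ∀ i j, i ≠ j → ω i j ≠ 0 → 0 < c i j)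
    (hczero : ∀ i j, i ≠ j → ω i j = 0 → c i j = 0)
    (hspan : ∀ A : Matrix (Fin 2) (Fin 2) ℝ,
      A ∈ Submodule.span ℝ
          {M : Matrix (Fin 2) (Fin 2) ℝ | ∃ i j : Fin N, ω i j ≠ 0 ∧
            M = Matrix.vecMulVec ![x i - x j, y i - y j] ![x i - x j, y i - y j]}
        ↔ A.IsSymm)
    (M : Matrix (Fin N ⊕ Fin N) (Fin N ⊕ Fin N) ℝ)
    (hM : M = Matrix.fromBlocks
      (stressMatrix ω + Lmat c (fun i j => (x i - x j) ^ 2))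
      (Lmat c (fun i j => (x i - x j) * (y i - y j)))
      (Lmat c (fun i j => (x i - x j) * (y i - y j)))
      (stressMatrix ω + Lmat c (fun i j => (y i - y j) ^ 2))) :
    ∀ u : Fin N ⊕ Fin N → ℝ, M *ᵥ u = 0 ↔
      u ∈ Submodule.span ℝ
        ({Sum.elim (1 : Fin N → ℝ) (0 : Fin N → ℝ),
          Sum.elim (0 : Fin N → ℝ) (1 : Fin N → ℝ),
          Sum.elim (-y) x} : Set (Fin N ⊕ Fin N → ℝ)) := by
  have hcs : ∀ i j, c i j = c j i := fun i j => by
    rw [hcdef, hcdef, hαs i j, hωs i j, hls i j, hr i j, hr j i]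
    rw [sub_sq_comm (x i), sub_sq_comm (y i)]
  have hcd : ∀ i, c i i = 0 := fun i => by rw [hcdef, hωd]; simp
  have hc0 : ∀ i j, 0 ≤ c i j := fun i j => by
    by_cases hij : i = j
    · subst hij; exact (hcd i).ge
    · by_cases hw : ω i j = 0
      · exact (hczero i j hij hw).ge
      · exact (hcpos i j hij hw).le
  have hw0 : ∀ i j, ω i j ≠ 0 → c i j ≠ 0 := fun i j hw => by
    have hij : i ≠ j := by rintro rfl; exact hw (hωd i)
    exact (hcpos i j hij hw).ne'
  have hMu : ∀ a b : Fin N → ℝ, M *ᵥ (Sum.elim a b) = 0 ↔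
      (∀ i, (stressMatrix ω *ᵥ a) i + ∑ k, c i k * (x i - x k) *
        ((x i - x k) * (a i - a k) + (y i - y k) * (b i - b k)) = 0) ∧
      (∀ i, (stressMatrix ω *ᵥ b) i + ∑ k, c i k * (y i - y k) *
        ((x i - x k) * (a i - a k) + (y i - y k) * (b i - b k)) = 0) := by
    intro a b
    rw [hM, Matrix.fromBlocks_mulVec, funext_iff, Sum.forall]
    simp only [Sum.elim_inl, Sum.elim_inr, Sum.elim_comp_inl, Sum.elim_comp_inr, Pi.zero_apply,
      Matrix.add_mulVec, Pi.add_apply, Lmat_mulVec_aux]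
    refine and_congr (forall_congr' fun i => ?_) (forall_congr' fun i => ?_)
    · rw [add_assoc, ← Finset.sum_add_distrib]
      refine Eq.congr_left (congrArg _ (Finset.sum_congr rfl fun k _ => ?_))
      ring
    · rw [add_left_comm, ← Finset.sum_add_distrib]
      refine Eq.congr_left (congrArg _ (Finset.sum_congr rfl fun k _ => ?_))
      ring
  intro u
  obtain ⟨a, b, rfl⟩ : ∃ a b, u = Sum.elim a b := ⟨_, _, (Sum.elim_comp_inl_inr u).symm⟩
  rw [hMu]
  simp only [Submodule.mem_span_insert, Submodule.mem_span_singleton] at hker ⊢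
  constructor
  · rintro ⟨h1, h2⟩
    let s : Fin N → Fin N → ℝ := fun i k =>
      (x i - x k) * (a i - a k) + (y i - y k) * (b i - b k)
    have hq := quad_aux c s (fun i k => x i - x k) (fun i k => y i - y k) a b hcs
      (fun i j => by simp only [s]; ring) (fun i j => by ring) (fun i j => by ring)
      (fun i j => rfl)
    have hsum : a ⬝ᵥ (stressMatrix ω *ᵥ a) + b ⬝ᵥ (stressMatrix ω *ᵥ b)
        + ∑ i, ∑ k, c i k * s i k * ((x i - x k) * a i + (y i - y k) * b i) = 0 := by
      simp only [dotProduct, ← Finset.sum_add_distrib]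
      refine Finset.sum_eq_zero fun i _ => ?_
      have e1 := h1 i
      have e2 := h2 i
      have e3 : ∑ k, c i k * s i k * ((x i - x k) * a i + (y i - y k) * b i)
          = a i * ∑ k, c i k * (x i - x k) * s i k + b i * ∑ k, c i k * (y i - y k) * s i k := by
        rw [Finset.mul_sum, Finset.mul_sum, ← Finset.sum_add_distrib]
        exact Finset.sum_congr rfl fun k _ => by ring
      rw [e3]
      linear_combination a i * e1 + b i * e2
    have pa : 0 ≤ a ⬝ᵥ (stressMatrix ω *ᵥ a) := by simpa using hΩ.dotProduct_mulVec_nonneg a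
    have pb : 0 ≤ b ⬝ᵥ (stressMatrix ω *ᵥ b) := by simpa using hΩ.dotProduct_mulVec_nonneg b
    have pt : ∀ i k, 0 ≤ c i k * s i k ^ 2 := fun i k => mul_nonneg (hc0 i k) (sq_nonneg _)
    have ps : 0 ≤ ∑ i, ∑ k, c i k * s i k ^ 2 :=
      Finset.sum_nonneg fun i _ => Finset.sum_nonneg fun k _ => pt i k
    have za : stressMatrix ω *ᵥ a = 0 := by
      apply (hΩ.dotProduct_mulVec_zero_iff a).1
      simp only [star_trivial]
      linarith
    have zb : stressMatrix ω *ᵥ b = 0 := by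
      apply (hΩ.dotProduct_mulVec_zero_iff b).1
      simp only [star_trivial]
      linarith
    have zs : ∑ i, ∑ k, c i k * s i k ^ 2 = 0 := by linarith
    have zs' : ∀ i k, ω i k ≠ 0 → s i k = 0 := by
      intro i k hw
      have t1 := (Finset.sum_eq_zero_iff_of_nonneg
        (fun i _ => Finset.sum_nonneg fun k _ => pt i k)).1 zs i (Finset.mem_univ i)
      have t2 := (Finset.sum_eq_zero_iff_of_nonneg (fun k _ => pt i k)).1 t1 k (Finset.mem_univ k)
      simpa [hw0 i k hw] using t2
    obtain ⟨a1, _, ⟨a2, _, ⟨a3, rfl⟩, rfl⟩, rfl⟩ := (hker a).1 za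
    obtain ⟨b1, _, ⟨b2, _, ⟨b3, rfl⟩, rfl⟩, rfl⟩ := (hker b).1 zb
    have key : ∀ A : Matrix (Fin 2) (Fin 2) ℝ, A.IsSymm →
        a1 * A 0 0 + (a2 + b1) * A 0 1 + b2 * A 1 1 = 0 := by
      intro A hA
      have hA' := (hspan A).2 hA
      induction hA' using Submodule.span_induction with
      | mem B hB =>
        obtain ⟨i, j, hw, rfl⟩ := hB
        have := zs' i j hw
        simp [s, Matrix.vecMulVec_apply] at this ⊢
        linear_combination this
      | zero => simp
      | add B C hB hC h h' =>
        have h := h ((hspan B).1 hB)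
        have h' := h' ((hspan C).1 hC)
        simp only [Matrix.add_apply]
        linear_combination h + h'
      | smul t B hB h =>
        have h := h ((hspan B).1 hB)
        simp only [Matrix.smul_apply, smul_eq_mul]
        linear_combination t * h
    have k1 := key !![1, 0; 0, 0] (by ext i j; fin_cases i <;> fin_cases j <;> rfl)
    have k2 := key !![0, 0; 0, 1] (by ext i j; fin_cases i <;> fin_cases j <;> rfl)
    have k3 := key !![0, 1; 1, 0] (by ext i j; fin_cases i <;> fin_cases j <;> rfl)
    simp at k1 k2 k3
    refine ⟨a3, _, ⟨b3, _, ⟨b1, rfl⟩, rfl⟩, ?_⟩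
    have k4 : a2 = -b1 := by linarith
    subst k1 k2 k4
    ext (i | i) <;> simp <;> ring
  · rintro ⟨p, _, ⟨q, _, ⟨t, rfl⟩, rfl⟩, h⟩
    have ha : a = (0:ℝ) • x + ((-t) • y + p • (1 : Fin N → ℝ)) := by
      ext i
      have := congrFun h (Sum.inl i)
      simp at this ⊢
      linarith
    have hb : b = t • x + ((0:ℝ) • y + q • (1 : Fin N → ℝ)) := by
      ext i
      have := congrFun h (Sum.inr i)
      simp at this ⊢
      linarith
    have za := (hker a).2 ⟨0, _, ⟨-t, _, ⟨p, rfl⟩, rfl⟩, ha⟩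
    have zb := (hker b).2 ⟨t, _, ⟨0, _, ⟨q, rfl⟩, rfl⟩, hb⟩
    rw [za, zb]
    have hs : ∀ i k, (x i - x k) * (a i - a k) + (y i - y k) * (b i - b k) = 0 := by
      intro i k
      rw [ha, hb]
      simp
      ring
    simp [hs]
end

section
/- (Theorem 1) Let N ≥ 4 and let q^e = (x^e, y^e) be a placement with pairwise distinct node positions and x^e, y^e, 1 linearly independent. Suppose the stress matrix Ω is positive semidefinite with kernel exactly span{x^e, y^e, 1}; for each edge with ω_ij ≠ 0 set α_ij = π/arctan(ω_ij) and l_ij = r^e_ij (1 − arctan(ω_ij)/π); and suppose the rank-one matrices (q^e_i − q^e_j)(q^e_i − q^e_j)ᵀ over the edges with ω_ij ≠ 0 span the space of symmetric 2×2 matrices. Then q^e is a critical point and a local minimum of the augmented potential Ṽ, and it is isolated modulo rigid motions: there exists ε > 0 such that every critical point q of Ṽ with ‖q − q^e‖ < ε is of the form q_i = R q^e_i + t for all i, for some rotation R ∈ SO(2) and translation t ∈ ℝ². -/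
open Finset Matrix Real

lemma sum_lt_symm {N : ℕ} (F : Fin N → Fin N → ℝ) (hs : ∀ i j, F i j = F j i) (hd : ∀ i, F i i = 0) :
    ∑ i, ∑ j, F i j = 2 * ∑ i, ∑ j, (if i < j then F i j else 0) := by
  have h1 : ∑ i, ∑ j, F i j = ∑ i, ∑ j, ((if i < j then F i j else 0) + (if j < i then F j i else 0)) := by
    refine Finset.sum_congr rfl fun i _ => Finset.sum_congr rfl fun j _ => ?_
    rcases lt_trichotomy i j with h | h | h
    · simp [h, h.not_gt]
    · subst h; simp [hd]
    · simp [h, h.not_gt, hs i j]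
  rw [h1]
  simp only [Finset.sum_add_distrib]
  rw [Finset.sum_comm (f := fun i j => if j < i then F j i else 0)]
  ring

lemma stress_mulVec {N : ℕ} (w : Fin N → Fin N → ℝ) (b : Fin N → ℝ) (i : Fin N) :
    (stressMatrix w *ᵥ b) i = ∑ j, w i j * (b i - b j) := by
  simp only [Matrix.mulVec, dotProduct, stressMatrix, Matrix.of_apply]
  rw [← Finset.add_sum_erase _ _ (Finset.mem_univ i), ← Finset.add_sum_erase _ (fun j => w i j * (b i - b j)) (Finset.mem_univ i)]
  simp only [if_true, sub_self, mul_zero, zero_add, Finset.sum_mul]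
  rw [← Finset.sum_add_distrib]
  refine Finset.sum_congr rfl fun j hj => ?_
  rw [if_neg (Finset.ne_of_mem_erase hj).symm]
  ring

lemma stress_form {N : ℕ} (w : Fin N → Fin N → ℝ) (hw : ∀ i j, w i j = w j i) (a b : Fin N → ℝ) :
    ∑ i, ∑ j, (if i < j then w i j * ((a i - a j) * (b i - b j)) else 0)
      = a ⬝ᵥ (stressMatrix w *ᵥ b) := by
  have h := sum_lt_symm (fun i j => w i j * ((a i - a j) * (b i - b j)))
    (fun i j => by rw [hw i j]; ring) (fun i => by ring)
  have h2 : ∑ i, ∑ j, w i j * ((a i - a j) * (b i - b j)) = 2 * (a ⬝ᵥ (stressMatrix w *ᵥ b)) := by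
    simp only [dotProduct, stress_mulVec, Finset.mul_sum]
    have e1 : ∑ i, ∑ j, w i j * ((a i - a j) * (b i - b j)) =
      ∑ i, ∑ j, a i * (w i j * (b i - b j)) + ∑ i, ∑ j, a j * (w j i * (b j - b i)) := by
      simp only [← Finset.sum_add_distrib]
      refine Finset.sum_congr rfl fun i _ => Finset.sum_congr rfl fun j _ => ?_
      rw [hw j i]; ring
    rw [e1, Finset.sum_comm (f := fun i j => a j * (w j i * (b j - b i)))]
    simp only [← Finset.sum_add_distrib]
    refine Finset.sum_congr rfl fun i _ => Finset.sum_congr rfl fun j _ => ?_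
    ring
  linarith

open Topology Filter in
lemma pos_nhd {X : Type*} [TopologicalSpace X] {N : ℕ} (x0 : X) (w : X → Fin N → Fin N → ℝ)
    (hw : ∀ i j, i < j → ContinuousAt (fun x => w x i j) x0) (e : Fin 3 → Fin N → ℝ)
    (h0 : ∀ u : Fin N → ℝ, u ≠ 0 → 0 < ∑ i, ∑ j, (if i < j then w x0 i j * ((u i - u j) * (u i - u j)) else 0)
      + ∑ a, (∑ i, e a i * u i) ^ 2) :
    ∀ᶠ x in 𝓝 x0, ∀ u : Fin N → ℝ, u ≠ 0 →
      0 < ∑ i, ∑ j, (if i < j then w x i j * ((u i - u j) * (u i - u j)) else 0)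
      + ∑ a, (∑ i, e a i * u i) ^ 2 := by
  have hc : IsCompact (Metric.sphere (0 : Fin N → ℝ) 1) := isCompact_sphere _ _
  have key : ∀ᶠ x in 𝓝 x0, ∀ u ∈ Metric.sphere (0 : Fin N → ℝ) 1,
      0 < ∑ i, ∑ j, (if i < j then w x i j * ((u i - u j) * (u i - u j)) else 0)
      + ∑ a, (∑ i, e a i * u i) ^ 2 := by
    refine hc.eventually_forall_of_forall_eventually fun u hu => ?_
    have hu0 : u ≠ 0 := by
      rintro rfl; simp at hu
    have hcont : ContinuousAt (fun z : X × (Fin N → ℝ) =>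
      ∑ i, ∑ j, (if i < j then w z.1 i j * ((z.2 i - z.2 j) * (z.2 i - z.2 j)) else 0)
      + ∑ a, (∑ i, e a i * z.2 i) ^ 2) (x0, u) := by
      refine ContinuousAt.add ?_ (by fun_prop)
      refine tendsto_finsetSum _ fun i _ => tendsto_finsetSum _ fun j _ => ?_
      by_cases hij : i < j
      · simp only [hij, if_true]
        have h1 : ContinuousAt (fun z : X × (Fin N → ℝ) => w z.1 i j) (x0, u) :=
          ContinuousAt.comp (f := Prod.fst) (g := fun x => w x i j) (hw i j hij) continuousAt_fst
        exact h1.mul (by fun_prop)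
      · simp only [hij, if_false]; exact tendsto_const_nhds
    exact hcont.eventually (lt_mem_nhds (h0 u hu0))
  filter_upwards [key] with x hx u hu
  have hn : 0 < ‖u‖ := norm_pos_iff.2 hu
  have := hx (‖u‖⁻¹ • u) (by simp [norm_smul, hn.ne'])
  have e2 : ∑ i, ∑ j, (if i < j then w x i j * (((‖u‖⁻¹ • u) i - (‖u‖⁻¹ • u) j) * ((‖u‖⁻¹ • u) i - (‖u‖⁻¹ • u) j)) else 0)
      + ∑ a, (∑ i, e a i * (‖u‖⁻¹ • u) i) ^ 2 = (‖u‖⁻¹)^2 * (∑ i, ∑ j, (if i < j then w x i j * ((u i - u j) * (u i - u j)) else 0)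
      + ∑ a, (∑ i, e a i * u i) ^ 2) := by
    simp only [mul_add, Finset.mul_sum, Pi.smul_apply, smul_eq_mul]
    congr 1
    · refine Finset.sum_congr rfl fun i _ => Finset.sum_congr rfl fun j _ => ?_
      split_ifs
      · ring
      · ring
    · refine Finset.sum_congr rfl fun a _ => ?_
      rw [← mul_pow, Finset.mul_sum]
      congr 1
      refine Finset.sum_congr rfl fun i _ => ?_
      ring
  rw [e2] at this
  exact pos_of_mul_pos_right this (by positivity)

lemma norm_line {E : Type*} [NormedAddCommGroup E] [InnerProductSpace ℝ E] (a b : E) (ha : a ≠ 0) :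
    HasDerivAt (fun t : ℝ => ‖a + t • b‖) (inner ℝ a b / ‖a‖) 0 := by
  have h1 : HasDerivAt (fun t : ℝ => a + t • b) b 0 := by
    simpa using ((hasDerivAt_id (0:ℝ)).smul_const b).const_add a
  have h2 := h1.norm_sq.sqrt (by simpa using ha)
  simp only [Real.sqrt_sq (norm_nonneg _)] at h2
  convert h2 using 1
  simp
  field_simp

lemma id_term (k l r r0 : ℝ) (h : r0 ≠ 0) : k * (r - l)^2 = k * (r0 - l)^2 +
    k * (1 - l / r0) * (r^2 - r0^2) + k * l / r0 * (r - r0)^2 := by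
  field_simp
  ring

lemma V_identity {N : ℕ} (k l : Fin N → Fin N → ℝ) (p q : Fin N → EuclideanSpace ℝ (Fin 2))
    (hp : ∀ i j, i ≠ j → p i ≠ p j) :
    ∑ i, ∑ j, (if i < j then k i j * (‖q i - q j‖ - l i j) ^ 2 else 0) =
    ∑ i, ∑ j, (if i < j then k i j * (‖p i - p j‖ - l i j) ^ 2 else 0)
    + (∑ i, ∑ j, (if i < j then k i j * (1 - l i j / ‖p i - p j‖) * ‖q i - q j‖ ^ 2 else 0)
      - ∑ i, ∑ j, (if i < j then k i j * (1 - l i j / ‖p i - p j‖) * ‖p i - p j‖ ^ 2 else 0))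
    + ∑ i, ∑ j, (if i < j then k i j * l i j / ‖p i - p j‖ * (‖q i - q j‖ - ‖p i - p j‖) ^ 2 else 0) := by
  simp only [← Finset.sum_add_distrib, ← Finset.sum_sub_distrib]
  refine Finset.sum_congr rfl fun i _ => Finset.sum_congr rfl fun j _ => ?_
  split_ifs with h
  · have h0 : ‖p i - p j‖ ≠ 0 := norm_ne_zero_iff.2 (sub_ne_zero.2 (hp i j h.ne))
    rw [id_term (k i j) (l i j) ‖q i - q j‖ _ h0]
    ring
  · simp

lemma quad_form {N : ℕ} (w : Fin N → Fin N → ℝ) (hw : ∀ i j, w i j = w j i)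
    (q h : Fin N → EuclideanSpace ℝ (Fin 2)) :
    ∑ i, ∑ j, (if i < j then w i j * inner ℝ (q i - q j) (h i - h j) else 0) =
    (fun i => h i 0) ⬝ᵥ (stressMatrix w *ᵥ (fun i => q i 0)) +
    (fun i => h i 1) ⬝ᵥ (stressMatrix w *ᵥ (fun i => q i 1)) := by
  rw [← stress_form w hw, ← stress_form w hw]
  simp only [← Finset.sum_add_distrib]
  refine Finset.sum_congr rfl fun i _ => Finset.sum_congr rfl fun j _ => ?_
  split_ifs
  · simp [PiLp.inner_apply, Fin.sum_univ_two]; ring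
  · simp

lemma crit_form {N : ℕ} (k l : Fin N → Fin N → ℝ) (q : Fin N → EuclideanSpace ℝ (Fin 2))
    (hq : ∀ i j, i ≠ j → q i ≠ q j)
    (hf : fderiv ℝ (fun q : Fin N → EuclideanSpace ℝ (Fin 2) => (1 / 2 : ℝ) * ∑ i : Fin N, ∑ j : Fin N, (if i < j then
        k i j * (‖q i - q j‖ - l i j) ^ 2 else 0)) q = 0)
    (h : Fin N → EuclideanSpace ℝ (Fin 2)) :
    ∑ i, ∑ j, (if i < j then k i j * (1 - l i j / ‖q i - q j‖) * inner ℝ (q i - q j) (h i - h j) else 0) = 0 := by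
  have hd : DifferentiableAt ℝ (fun q : Fin N → EuclideanSpace ℝ (Fin 2) => (1 / 2 : ℝ) * ∑ i : Fin N, ∑ j : Fin N, (if i < j then
        k i j * (‖q i - q j‖ - l i j) ^ 2 else 0)) q := by
    refine DifferentiableAt.const_mul ?_ _
    refine DifferentiableAt.fun_sum fun i _ => DifferentiableAt.fun_sum fun j _ => ?_
    by_cases hij : i < j
    · simp only [hij, if_true]
      have : DifferentiableAt ℝ (fun q : Fin N → EuclideanSpace ℝ (Fin 2) => ‖q i - q j‖) q :=
        DifferentiableAt.norm ℝ (by fun_prop) (sub_ne_zero.2 (hq i j hij.ne))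
      fun_prop
    · simp only [hij, if_false]; fun_prop
  have h1 : HasDerivAt (fun t : ℝ => q + t • h) h 0 := by
    simpa using ((hasDerivAt_id (0:ℝ)).smul_const h).const_add q
  have hF := hd.hasFDerivAt
  rw [hf] at hF
  have h2 := HasFDerivAt.comp_hasDerivAt_of_eq (0:ℝ) hF h1 (by simp)
  have h3 : HasDerivAt (fun t : ℝ => (1 / 2 : ℝ) * ∑ i : Fin N, ∑ j : Fin N, (if i < j then
        k i j * (‖(q i - q j) + t • (h i - h j)‖ - l i j) ^ 2 else 0))
      ((1/2 : ℝ) * ∑ i : Fin N, ∑ j : Fin N, (if i < j then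
        2 * (k i j * (1 - l i j / ‖q i - q j‖) * inner ℝ (q i - q j) (h i - h j)) else 0)) 0 := by
    refine HasDerivAt.const_mul _ ?_
    refine HasDerivAt.fun_sum fun i _ => HasDerivAt.fun_sum fun j _ => ?_
    by_cases hij : i < j
    · simp only [hij, if_true]
      have h0 : q i - q j ≠ 0 := (sub_ne_zero.2 (hq i j hij.ne))
      have := (((norm_line _ (h i - h j) h0).sub_const (l i j)).fun_pow 2).const_mul (k i j)
      refine this.congr_deriv ?_
      have : ‖q i - q j‖ ≠ 0 := norm_ne_zero_iff.2 h0
      simp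
      field_simp
    · simp only [hij, if_false]; exact hasDerivAt_const _ _
  have h4 : (fun t : ℝ => (1 / 2 : ℝ) * ∑ i : Fin N, ∑ j : Fin N, (if i < j then
        k i j * (‖(q i - q j) + t • (h i - h j)‖ - l i j) ^ 2 else 0)) =
      (fun q : Fin N → EuclideanSpace ℝ (Fin 2) => (1 / 2 : ℝ) * ∑ i : Fin N, ∑ j : Fin N, (if i < j then
        k i j * (‖q i - q j‖ - l i j) ^ 2 else 0)) ∘ (fun t : ℝ => q + t • h) := by
    funext t
    simp only [Function.comp, Pi.add_apply, Pi.smul_apply, smul_sub, add_sub_add_comm]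
  rw [h4] at h3
  have h5 := h3.unique h2
  simp only [_root_.zero_apply, mul_ite_zero, Finset.mul_sum] at h5
  refine Eq.trans ?_ h5
  refine Finset.sum_congr rfl fun i _ => Finset.sum_congr rfl fun j _ => ?_
  split_ifs <;> ring

lemma psd_of_ker {N : ℕ} (w : Fin N → Fin N → ℝ) (hw : ∀ i j, w i j = w j i)
    (e f : Fin 3 → Fin N → ℝ)
    (hf : ∀ b, stressMatrix w *ᵥ f b = 0)
    (hpos : ∀ u : Fin N → ℝ, u ≠ 0 →
      0 < ∑ i, ∑ j, (if i < j then w i j * ((u i - u j) * (u i - u j)) else 0)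
      + ∑ a, (∑ i, e a i * u i) ^ 2)
    (hdet : (Matrix.of (fun a b => ∑ i, e a i * f b i) : Matrix (Fin 3) (Fin 3) ℝ).det ≠ 0)
    (u : Fin N → ℝ) : 0 ≤ u ⬝ᵥ (stressMatrix w *ᵥ u) := by
  set G := (Matrix.of (fun a b => ∑ i, e a i * f b i) : Matrix (Fin 3) (Fin 3) ℝ) with hG
  set c := G⁻¹ *ᵥ (fun a => ∑ i, e a i * u i) with hc
  have hGc : G *ᵥ c = fun a => ∑ i, e a i * u i := by
    rw [hc, Matrix.mulVec_mulVec, Matrix.mul_nonsing_inv _ (isUnit_iff_ne_zero.2 hdet), Matrix.one_mulVec]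
  set s := ∑ b, c b • f b with hs
  have hΩs : stressMatrix w *ᵥ s = 0 := by
    rw [hs, Matrix.mulVec_sum]
    simp [Matrix.mulVec_smul, hf]
  have hEs : ∀ a, ∑ i, e a i * (u - s) i = 0 := by
    intro a
    have := congrFun hGc a
    simp only [Matrix.mulVec, dotProduct, hG, Matrix.of_apply, Finset.sum_mul] at this
    rw [Finset.sum_comm] at this
    simp only [hs, Pi.sub_apply, Finset.sum_apply, Pi.smul_apply, smul_eq_mul, mul_sub, Finset.sum_sub_distrib, ← this, Finset.mul_sum]
    rw [sub_eq_zero]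
    refine Finset.sum_congr rfl fun i _ => Finset.sum_congr rfl fun j _ => ?_
    ring
  have hsym : s ⬝ᵥ (stressMatrix w *ᵥ u) = 0 := by
    have : s ⬝ᵥ (stressMatrix w *ᵥ u) = u ⬝ᵥ (stressMatrix w *ᵥ s) := by
      rw [← stress_form w hw, ← stress_form w hw]
      refine Finset.sum_congr rfl fun i _ => Finset.sum_congr rfl fun j _ => ?_
      split_ifs <;> ring
    rw [this, hΩs]; simp
  have he : u ⬝ᵥ (stressMatrix w *ᵥ u) = (u - s) ⬝ᵥ (stressMatrix w *ᵥ (u - s)) := by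
    rw [Matrix.mulVec_sub, hΩs, sub_zero, sub_dotProduct, hsym, sub_zero]
  rw [he]
  by_cases h0 : u - s = 0
  · rw [h0]; simp
  · have := hpos _ h0
    rw [stress_form w hw] at this
    simp only [hEs, ne_eq, OfNat.ofNat_ne_zero, not_false_eq_true, zero_pow, Finset.sum_const_zero, add_zero] at this
    exact this.le

lemma orth_of_span (A : Matrix (Fin 2) (Fin 2) ℝ) (S : Set (Matrix (Fin 2) (Fin 2) ℝ))
    (hS : ∀ M ∈ S, ((Aᵀ * A) * M).trace = M.trace)
    (hspan : ∀ B : Matrix (Fin 2) (Fin 2) ℝ, B.IsSymm → B ∈ Submodule.span ℝ S) :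
    Aᵀ * A = 1 := by
  have h : ∀ B : Matrix (Fin 2) (Fin 2) ℝ, B.IsSymm → ((Aᵀ * A) * B).trace = B.trace := by
    intro B hB
    have hm := hspan B hB
    clear hB
    induction hm using Submodule.span_induction with
    | mem x h => exact hS x h
    | zero => simp
    | add x y _ _ hx hy => rw [mul_add, Matrix.trace_add, Matrix.trace_add, hx, hy]
    | smul a x _ hx => rw [Matrix.mul_smul, Matrix.trace_smul, Matrix.trace_smul, hx]
  have h1 := h !![1, 0; 0, 0] (by ext i j; fin_cases i <;> fin_cases j <;> rfl)
  have h2 := h !![0, 0; 0, 1] (by ext i j; fin_cases i <;> fin_cases j <;> rfl)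
  have h3 := h !![0, 1; 1, 0] (by ext i j; fin_cases i <;> fin_cases j <;> rfl)
  simp [Matrix.trace_fin_two, Matrix.mul_apply, Fin.sum_univ_two] at h1 h2 h3
  ext i j
  fin_cases i <;> fin_cases j <;> simp [Matrix.mul_apply, Fin.sum_univ_two] <;> linarith

lemma edge_facts (w r0 : ℝ) (hw : w ≠ 0) (hr : 0 < r0) :
    0 < π / Real.arctan w * w ∧ 0 < r0 * (1 - Real.arctan w / π) ∧
    π / Real.arctan w * w * (1 - r0 * (1 - Real.arctan w / π) / r0) = w := by
  have ha : Real.arctan w ≠ 0 := by simpa [Real.arctan_eq_zero_iff] using hw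
  have hpi := Real.pi_pos
  refine ⟨?_, ?_, ?_⟩
  · rcases lt_or_gt_of_ne hw with h | h
    · have : Real.arctan w < 0 := Real.arctan_lt_zero.2 h
      exact mul_pos_of_neg_of_neg (div_neg_of_pos_of_neg hpi this) h
    · have : 0 < Real.arctan w := Real.arctan_pos.2 h
      positivity
  · have h1 := Real.arctan_lt_pi_div_two w
    have : Real.arctan w / π < 1 := by rw [div_lt_one hpi]; linarith
    exact mul_pos hr (by linarith)
  · field_simp
    ring

lemma gram_pos {N : ℕ} (e : Fin 3 → Fin N → ℝ) (he : LinearIndependent ℝ e) :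
    0 < (Matrix.of (fun a b => ∑ i, e a i * e b i) : Matrix (Fin 3) (Fin 3) ℝ).det := by
  have h := Matrix.PosDef.conjTranspose_mul_self (Matrix.of fun i a => e a i : Matrix (Fin N) (Fin 3) ℝ)
    (by rw [Matrix.mulVec_injective_iff]; exact he)
  have h2 : (Matrix.of (fun a b => ∑ i, e a i * e b i) : Matrix (Fin 3) (Fin 3) ℝ) =
      (Matrix.of fun i a => e a i : Matrix (Fin N) (Fin 3) ℝ)ᴴ * (Matrix.of fun i a => e a i) := by
    ext a b
    simp [Matrix.mul_apply]
  rw [h2]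
  exact h.det_pos

lemma det_affine {N : ℕ} (e f : Fin 3 → Fin N → ℝ) (a b c d s t : ℝ)
    (h0 : f 0 = a • e 0 + b • e 1 + s • e 2) (h1 : f 1 = c • e 0 + d • e 1 + t • e 2)
    (h2 : f 2 = e 2) :
    (Matrix.of (fun a b => ∑ i, e a i * f b i) : Matrix (Fin 3) (Fin 3) ℝ).det =
    (Matrix.of (fun a b => ∑ i, e a i * e b i) : Matrix (Fin 3) (Fin 3) ℝ).det * (a * d - b * c) := by
  have hM : (Matrix.of (fun a b => ∑ i, e a i * f b i) : Matrix (Fin 3) (Fin 3) ℝ) =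
    (Matrix.of (fun a b => ∑ i, e a i * e b i) : Matrix (Fin 3) (Fin 3) ℝ) * !![a, c, 0; b, d, 0; s, t, 1] := by
    ext p r
    fin_cases r <;>
      simp [Matrix.mul_apply, Fin.sum_univ_three, h0, h1, h2, Finset.sum_mul, ← Finset.sum_add_distrib] <;>
      exact Finset.sum_congr rfl fun i _ => by ring
  rw [hM, Matrix.det_mul]
  congr 1
  simp [Matrix.det_fin_three]
  ring


/-- Theorem 1: under the stated hypotheses, the placement `q^e` is a
critical point and local minimum of the augmented potential `Ṽ`, and it is isolated
modulo rigid motions: all nearby critical points are rigid motions of `q^e`. -/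
theorem equilibrium_isolated_modulo_rigid_motions
    {N : ℕ} (hN : 4 ≤ N)
    (qe : Fin N → EuclideanSpace ℝ (Fin 2))
    (hdist : ∀ i j, i ≠ j → qe i ≠ qe j)
    (hli : LinearIndependent ℝ
      ![fun i => qe i 0, fun i => qe i 1, (1 : Fin N → ℝ)])
    (ω : Fin N → Fin N → ℝ)
    (hωs : ∀ i j, ω i j = ω j i) (hωd : ∀ i, ω i i = 0)
    (hΩ : (stressMatrix ω).PosSemidef)
    (hker : ∀ u : Fin N → ℝ, (stressMatrix ω) *ᵥ u = 0 ↔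
        u ∈ Submodule.span ℝ
          ({fun i => qe i 0, fun i => qe i 1, (1 : Fin N → ℝ)} : Set (Fin N → ℝ)))
    (α l : Fin N → Fin N → ℝ)
    (hα : ∀ i j, i ≠ j → ω i j ≠ 0 → α i j = π / Real.arctan (ω i j))
    (hl : ∀ i j, i ≠ j → ω i j ≠ 0 →
      l i j = ‖qe i - qe j‖ * (1 - Real.arctan (ω i j) / π))
    (hspan : ∀ A : Matrix (Fin 2) (Fin 2) ℝ, A.IsSymm →
      A ∈ Submodule.span ℝ
          {M : Matrix (Fin 2) (Fin 2) ℝ | ∃ i j : Fin N, ω i j ≠ 0 ∧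
            M = Matrix.vecMulVec (fun k => qe i k - qe j k) (fun k => qe i k - qe j k)})
    (Vt : (Fin N → EuclideanSpace ℝ (Fin 2)) → ℝ)
    (hVt : Vt = fun q => (1 / 2 : ℝ) * ∑ i : Fin N, ∑ j : Fin N, (if i < j then
        α i j * ω i j * (‖q i - q j‖ - l i j) ^ 2 else 0)) :
    fderiv ℝ Vt qe = 0 ∧
    IsLocalMin Vt qe ∧
    ∃ ε > (0 : ℝ), ∀ q : Fin N → EuclideanSpace ℝ (Fin 2),
      dist q qe < ε → fderiv ℝ Vt q = 0 →
      ∃ (R : Matrix (Fin 2) (Fin 2) ℝ) (t : EuclideanSpace ℝ (Fin 2)),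
        R ∈ Matrix.orthogonalGroup (Fin 2) ℝ ∧ R.det = 1 ∧
        ∀ i, q i = Matrix.toEuclideanLin R (qe i) + t := by
  have hr0 : ∀ i j, i ≠ j → 0 < ‖qe i - qe j‖ := fun i j h =>
    norm_pos_iff.2 (sub_ne_zero.2 (hdist i j h))
  have hne : ∀ i j, ω i j ≠ 0 → i ≠ j := by
    rintro i j h rfl; exact h (hωd i)
  obtain ⟨k, hk⟩ : ∃ k : Fin N → Fin N → ℝ, k = fun i j => α i j * ω i j := ⟨_, rfl⟩
  have hk0 : ∀ i j, ω i j = 0 → k i j = 0 := by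
    intro i j h; simp [hk, h]
  have hedge : ∀ i j, ω i j ≠ 0 → 0 < k i j ∧ 0 < l i j ∧ k i j * (1 - l i j / ‖qe i - qe j‖) = ω i j := by
    intro i j h
    have := edge_facts (ω i j) ‖qe i - qe j‖ h (hr0 i j (hne i j h))
    rw [← hα i j (hne i j h) h, ← hl i j (hne i j h) h] at this
    simpa [hk] using this
  have hwe : ∀ i j, k i j * (1 - l i j / ‖qe i - qe j‖) = ω i j := by
    intro i j
    by_cases h : ω i j = 0
    · rw [hk0 i j h, h, zero_mul]
    · exact (hedge i j h).2.2
  have hwsym : ∀ (q : Fin N → EuclideanSpace ℝ (Fin 2)) i j,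
      k i j * (1 - l i j / ‖q i - q j‖) = k j i * (1 - l j i / ‖q j - q i‖) := by
    intro q i j
    by_cases h : ω i j = 0
    · rw [hk0 i j h, hk0 j i (by rw [hωs]; exact h)]; simp
    · have h' : ω j i ≠ 0 := by rw [hωs]; exact h
      have hij := hne i j h
      simp only [hk]
      rw [hα i j hij h, hα j i hij.symm h', hl i j hij h, hl j i hij.symm h', hωs j i,
        norm_sub_rev (q j), norm_sub_rev (qe j)]
  have hkl : ∀ i j, 0 ≤ k i j * l i j := by
    intro i j
    by_cases h : ω i j = 0
    · rw [hk0 i j h, zero_mul]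
    · exact (mul_pos (hedge i j h).1 (hedge i j h).2.1).le
  have hV : Vt = fun q => (1 / 2 : ℝ) * ∑ i : Fin N, ∑ j : Fin N, (if i < j then
        k i j * (‖q i - q j‖ - l i j) ^ 2 else 0) := by rw [hVt, hk]
  -- remainder
  have hD : ∀ p q : Fin N → EuclideanSpace ℝ (Fin 2), 0 ≤ ∑ i, ∑ j, (if i < j then
      k i j * l i j / ‖p i - p j‖ * (‖q i - q j‖ - ‖p i - p j‖) ^ 2 else 0) := by
    intro p q
    refine Finset.sum_nonneg fun i _ => Finset.sum_nonneg fun j _ => ?_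
    split_ifs
    · exact mul_nonneg (div_nonneg (hkl i j) (norm_nonneg _)) (sq_nonneg _)
    · exact le_rfl
  have hQ : ∀ (w : Fin N → Fin N → ℝ), (∀ i j, w i j = w j i) → ∀ q : Fin N → EuclideanSpace ℝ (Fin 2),
      ∑ i, ∑ j, (if i < j then w i j * ‖q i - q j‖ ^ 2 else 0) =
      (fun i => q i 0) ⬝ᵥ (stressMatrix w *ᵥ (fun i => q i 0)) +
      (fun i => q i 1) ⬝ᵥ (stressMatrix w *ᵥ (fun i => q i 1)) := by
    intro w hw q
    rw [← quad_form w hw q q]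
    simp only [real_inner_self_eq_norm_sq]
  have hΩ0 : ∀ u : Fin N → ℝ, 0 ≤ u ⬝ᵥ (stressMatrix ω *ᵥ u) := fun u => by
    simpa using hΩ.dotProduct_mulVec_nonneg u
  have hΩz : ∀ u : Fin N → ℝ, u ⬝ᵥ (stressMatrix ω *ᵥ u) = 0 → stressMatrix ω *ᵥ u = 0 := fun u hu =>
    (hΩ.dotProduct_mulVec_zero_iff u).1 (by simpa using hu)
  have hx0 : stressMatrix ω *ᵥ (fun i => qe i 0) = 0 := (hker _).2 (Submodule.subset_span (by simp))
  have hy0 : stressMatrix ω *ᵥ (fun i => qe i 1) = 0 := (hker _).2 (Submodule.subset_span (by simp))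
  have hVe : ∀ q, 2 * Vt q = 2 * Vt qe + ((fun i => q i 0) ⬝ᵥ (stressMatrix ω *ᵥ (fun i => q i 0)) +
      (fun i => q i 1) ⬝ᵥ (stressMatrix ω *ᵥ (fun i => q i 1))) + ∑ i, ∑ j, (if i < j then
      k i j * l i j / ‖qe i - qe j‖ * (‖q i - q j‖ - ‖qe i - qe j‖) ^ 2 else 0) := by
    intro q
    have := V_identity k l qe q hdist
    simp only [hwe] at this
    rw [hQ ω hωs, hQ ω hωs, hx0, hy0] at this
    simp only [dotProduct_zero, add_zero, sub_zero] at this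
    rw [hV]
    linarith
  have hmin : ∀ q, Vt qe ≤ Vt q := by
    intro q
    have := hVe q
    have h1 := hD qe q
    have h2 := hΩ0 (fun i => q i 0)
    have h3 := hΩ0 (fun i => q i 1)
    linarith
  have hloc : IsLocalMin Vt qe := Filter.Eventually.of_forall hmin
  refine ⟨hloc.fderiv_eq_zero, hloc, ?_⟩
  -- neighbourhood
  obtain ⟨e, he⟩ : ∃ e : (Fin N → EuclideanSpace ℝ (Fin 2)) → Fin 3 → Fin N → ℝ,
    e = fun q => ![fun i => q i 0, fun i => q i 1, (1 : Fin N → ℝ)] := ⟨_, rfl⟩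
  have hliE : LinearIndependent ℝ (e qe) := by rw [he]; exact hli
  have ev1 : ∀ᶠ q in nhds qe, ∀ i j, i ≠ j → q i ≠ q j := by
    rw [Filter.eventually_all]; intro i
    rw [Filter.eventually_all]; intro j
    by_cases hij : i = j
    · simp [hij]
    · have : ∀ᶠ q in nhds qe, q i ≠ q j :=
        (isOpen_ne_fun (continuous_apply i) (continuous_apply j)).mem_nhds (hdist i j hij)
      filter_upwards [this] with q hq _ using hq
  have ev2 : ∀ᶠ q in nhds qe, 0 < (Matrix.of (fun a b => ∑ i, e qe a i * e q b i) : Matrix (Fin 3) (Fin 3) ℝ).det := by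
    have hc : Continuous (fun q => (Matrix.of (fun a b => ∑ i, e qe a i * e q b i) : Matrix (Fin 3) (Fin 3) ℝ).det) := by
      refine Continuous.matrix_det (continuous_matrix fun a b => ?_)
      simp only [Matrix.of_apply]
      refine continuous_finsetSum _ fun i _ => continuous_const.mul ?_
      rw [he]
      fin_cases b <;> simp <;> fun_prop
    exact hc.continuousAt.eventually (lt_mem_nhds (gram_pos _ hliE))
  have ev3 := pos_nhd qe (fun q i j => k i j * (1 - l i j / ‖q i - q j‖)) (by
      intro i j hij
      have := (hr0 i j hij.ne).ne'
      have h1 : ContinuousAt (fun q : Fin N → EuclideanSpace ℝ (Fin 2) => ‖q i - q j‖) qe := by fun_prop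
      exact continuousAt_const.mul (continuousAt_const.sub (continuousAt_const.div h1 this))) (e qe) (by
      intro u hu
      simp only [hwe]
      rw [stress_form ω hωs]
      have h2 : 0 ≤ ∑ a, (∑ i, e qe a i * u i) ^ 2 := Finset.sum_nonneg fun a _ => sq_nonneg _
      refine lt_of_le_of_ne (add_nonneg (hΩ0 u) h2) fun h => hu ?_
      have h3 : stressMatrix ω *ᵥ u = 0 := hΩz u (by linarith [hΩ0 u])
      have h4 : ∑ a, (∑ i, e qe a i * u i) ^ 2 = 0 := by linarith [hΩ0 u]
      rw [Finset.sum_eq_zero_iff_of_nonneg fun a _ => sq_nonneg _] at h4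
      have h5 : ∀ a, ∑ i, e qe a i * u i = 0 := fun a => by simpa using h4 a (Finset.mem_univ a)
      obtain ⟨a, b, c, habc⟩ := Submodule.mem_span_triple.1 ((hker u).1 h3)
      have e0 := h5 0
      have e1 := h5 1
      have e2 := h5 2
      simp only [he, Matrix.cons_val] at e0 e1 e2
      have : u ⬝ᵥ u = 0 := by
        calc u ⬝ᵥ u = (a • (fun i => qe i 0) + b • (fun i => qe i 1) + c • (1 : Fin N → ℝ)) ⬝ᵥ u := by rw [habc]
          _ = 0 := by
            rw [add_dotProduct, add_dotProduct, smul_dotProduct, smul_dotProduct, smul_dotProduct]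
            simp only [dotProduct, e0, e1, e2]
            simp
      exact dotProduct_self_eq_zero.1 this)
  obtain ⟨ε, hε, hball⟩ := Metric.eventually_nhds_iff.1 (ev1.and (ev2.and ev3))
  refine ⟨ε, hε, fun q hq hcrit => ?_⟩
  obtain ⟨hqd, hdet, hpos⟩ := hball hq
  have hcf := crit_form k l q hqd (by rw [← hV]; exact hcrit)
  obtain ⟨w, hw⟩ : ∃ w : Fin N → Fin N → ℝ, w = fun i j => k i j * (1 - l i j / ‖q i - q j‖) := ⟨_, rfl⟩
  have hws : ∀ i j, w i j = w j i := by rw [hw]; exact hwsym q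
  have hcf' : ∀ h : Fin N → EuclideanSpace ℝ (Fin 2), (fun i => h i 0) ⬝ᵥ (stressMatrix w *ᵥ (fun i => q i 0)) +
    (fun i => h i 1) ⬝ᵥ (stressMatrix w *ᵥ (fun i => q i 1)) = 0 := by
    intro h
    rw [← quad_form w hws q h, hw]
    exact hcf h
  have hwx : stressMatrix w *ᵥ (fun i => q i 0) = 0 := by
    have := hcf' (fun i => !₂[(stressMatrix w *ᵥ (fun i => q i 0)) i, 0])
    simp only [PiLp.toLp_apply, Matrix.cons_val] at this
    refine dotProduct_self_eq_zero.1 ?_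
    rw [← this]; simp [dotProduct]
  have hwy : stressMatrix w *ᵥ (fun i => q i 1) = 0 := by
    have := hcf' (fun i => !₂[0, (stressMatrix w *ᵥ (fun i => q i 1)) i])
    simp only [PiLp.toLp_apply, Matrix.cons_val] at this
    refine dotProduct_self_eq_zero.1 ?_
    rw [← this]; simp [dotProduct]
  have hw1 : stressMatrix w *ᵥ (1 : Fin N → ℝ) = 0 := by
    funext i; rw [stress_mulVec]; simp
  have hpsd := psd_of_ker w hws (e qe) (e q) (by
    intro b
    rw [he]
    fin_cases b
    · exact hwx
    · exact hwy
    · exact hw1) (by rw [hw]; exact hpos) hdet.ne'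
  have hle : Vt q ≤ Vt qe := by
    have h0 := V_identity k l q qe hqd
    have h1 := hQ w hws q
    have h2 := hQ w hws qe
    rw [hwx, hwy] at h1
    simp only [dotProduct_zero, add_zero] at h1
    rw [hw] at h1
    have h3 := hpsd (fun i => qe i 0)
    have h4 := hpsd (fun i => qe i 1)
    have h5 := hD q qe
    rw [hw] at h2 h3 h4
    simp only at h1 h2
    rw [h1, h2] at h0
    rw [hV]
    simp only
    linarith
  have hm := hmin q
  have hid := hVe q
  have hD1 := hD qe q
  have hx1 := hΩ0 (fun i => q i 0)
  have hy1 := hΩ0 (fun i => q i 1)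
  have hx2 := (hker _).1 (hΩz (fun i => q i 0) (by linarith))
  have hy2 := (hker _).1 (hΩz (fun i => q i 1) (by linarith))
  have hDz : ∑ i, ∑ j, (if i < j then
      k i j * l i j / ‖qe i - qe j‖ * (‖q i - q j‖ - ‖qe i - qe j‖) ^ 2 else 0) = 0 := by linarith
  have hlt : ∀ i j, i < j → ω i j ≠ 0 → ‖q i - q j‖ = ‖qe i - qe j‖ := by
    intro i j hij hwij
    have hnn : ∀ i j, 0 ≤ (if i < j then
      k i j * l i j / ‖qe i - qe j‖ * (‖q i - q j‖ - ‖qe i - qe j‖) ^ 2 else 0) := by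
      intro i j
      split_ifs
      · exact mul_nonneg (div_nonneg (hkl i j) (norm_nonneg _)) (sq_nonneg _)
      · exact le_rfl
    rw [Finset.sum_eq_zero_iff_of_nonneg fun i _ => Finset.sum_nonneg fun j _ => hnn i j] at hDz
    have h1 := hDz i (Finset.mem_univ i)
    rw [Finset.sum_eq_zero_iff_of_nonneg fun j _ => hnn i j] at h1
    have h2 := h1 j (Finset.mem_univ j)
    rw [if_pos hij] at h2
    have h3 : 0 < k i j * l i j / ‖qe i - qe j‖ :=
      div_pos (mul_pos (hedge i j hwij).1 (hedge i j hwij).2.1) (hr0 i j hij.ne)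
    have h4 := (mul_eq_zero.1 h2).resolve_left h3.ne'
    exact sub_eq_zero.1 (pow_eq_zero_iff (two_ne_zero) |>.1 h4)
  have hlen : ∀ i j, ω i j ≠ 0 → ‖q i - q j‖ = ‖qe i - qe j‖ := by
    intro i j hwij
    rcases lt_or_gt_of_ne (hne i j hwij) with h | h
    · exact hlt i j h hwij
    · rw [norm_sub_rev, norm_sub_rev (qe i)]
      exact hlt j i h (by rw [hωs]; exact hwij)
  obtain ⟨a, b, s, hx3⟩ := Submodule.mem_span_triple.1 hx2
  obtain ⟨c, d, t, hy3⟩ := Submodule.mem_span_triple.1 hy2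
  have hx4 : ∀ i, q i 0 = a * qe i 0 + b * qe i 1 + s := fun i => by
    simpa using (congrFun hx3 i).symm
  have hy4 : ∀ i, q i 1 = c * qe i 0 + d * qe i 1 + t := fun i => by
    simpa using (congrFun hy3 i).symm
  have horth : (!![a, b; c, d])ᵀ * !![a, b; c, d] = 1 := by
    refine orth_of_span _ _ ?_ hspan
    rintro M ⟨i, j, hij, rfl⟩
    have h1 : ‖q i - q j‖ ^ 2 = ‖qe i - qe j‖ ^ 2 := by rw [hlen i j hij]
    rw [EuclideanSpace.real_norm_sq_eq, EuclideanSpace.real_norm_sq_eq] at h1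
    simp only [Fin.sum_univ_two, PiLp.sub_apply, hx4, hy4] at h1
    simp [Matrix.trace_fin_two, Matrix.mul_apply, Fin.sum_univ_two, Matrix.vecMulVec_apply]
    linarith
  have hdetA : 0 < a * d - b * c := by
    have h1 := det_affine (e qe) (e q) a b c d s t (by rw [he]; exact hx3.symm) (by rw [he]; exact hy3.symm)
      (by rw [he]; rfl)
    rw [h1] at hdet
    exact pos_of_mul_pos_right hdet (gram_pos _ hliE).le
  refine ⟨!![a, b; c, d], !₂[s, t], (Matrix.mem_orthogonalGroup_iff' _ _).2 horth, ?_, ?_⟩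
  · have h1 := congrArg Matrix.det horth
    rw [Matrix.det_mul, Matrix.det_transpose, Matrix.det_one] at h1
    rw [Matrix.det_fin_two_of] at h1 ⊢
    nlinarith
  · intro i
    ext m
    fin_cases m
    · simp [hx4, Matrix.toLpLin_apply, Matrix.mulVec, dotProduct, Fin.sum_univ_two]
    · simp [hy4, Matrix.toLpLin_apply, Matrix.mulVec, dotProduct, Fin.sum_univ_two]
end

section
/- (Theorem 2) Let N ≥ 4 and let q^e = (x^e, y^e) be a placement with pairwise distinct node positions and x^e, y^e, 1 linearly independent. Suppose the stress matrix Ω is positive semidefinite with kernel exactly span{x^e, y^e, 1}; for each edge with ω_ij ≠ 0 set α_ij = π/arctan(ω_ij) and l_ij = r^e_ij (1 − arctan(ω_ij)/π); suppose the rank-one matrices (q^e_i − q^e_j)(q^e_i − q^e_j)ᵀ over the edges with ω_ij ≠ 0 span the space of symmetric 2×2 matrices; and let ν > 0. Let E = {((R q^e_1 + t, …, R q^e_N + t), 0) : R ∈ SO(2), t ∈ ℝ²} ⊂ ℝ^{2N} × ℝ^{2N}. Then E is a locally exponentially stable set of equilibria of the damped gradient system q̇_i = p_i, ṗ_i = −ν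 p_i − Σ_{j≠i} α_ij ω_ij (1 − l_ij/r_ij)(q_i − q_j): there exist δ, C, λ > 0 such that every solution (q(t), p(t)) of this system with dist((q(0), p(0)), E) < δ is defined for all t ≥ 0 and satisfies dist((q(t), p(t)), E) ≤ C e^{−λ t} dist((q(0), p(0)), E) for all t ≥ 0. -/
open Finset Matrix Real

abbrev P2 := EuclideanSpace ℝ (Fin 2)

noncomputable def JJ : P2 →ₗ[ℝ] P2 where
  toFun v := !₂[-v 1, v 0]
  map_add' v w := by
    ext i; fin_cases i <;> simp; ring
  map_smul' a v := by
    ext i; fin_cases i <;> simp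

lemma inner_P2 (v w : P2) : inner ℝ v w = v 0 * w 0 + v 1 * w 1 := by
  simp [PiLp.inner_apply, Fin.sum_univ_two]; ring

lemma normsq_P2 (v : P2) : ‖v‖ ^ 2 = v 0 ^ 2 + v 1 ^ 2 := by
  rw [← real_inner_self_eq_norm_sq, inner_P2]; ring

@[simp] lemma JJ_0 (v : P2) : JJ v 0 = - v 1 := by simp [JJ]
@[simp] lemma JJ_1 (v : P2) : JJ v 1 = v 0 := by simp [JJ]

noncomputable def SS {N : ℕ} (h : Fin N → P2) : ℝ := ∑ i, ‖h i‖ ^ 2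

lemma SS_nonneg {N : ℕ} (h : Fin N → P2) : 0 ≤ SS h := by unfold SS; positivity

lemma le_SS {N : ℕ} (h : Fin N → P2) (i : Fin N) : ‖h i‖ ^ 2 ≤ SS h := by
  unfold SS
  exact Finset.single_le_sum (f := fun i => ‖h i‖ ^ 2) (fun _ _ => by positivity) (Finset.mem_univ i)

lemma norm_sq_le_SS {N : ℕ} (h : Fin N → P2) : ‖h‖ ^ 2 ≤ SS h := by
  have : ‖h‖ ≤ √(SS h) := by
    rw [pi_norm_le_iff_of_nonneg (by positivity)]
    intro i
    exact Real.le_sqrt_of_sq_le (le_SS h i)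
  calc ‖h‖ ^ 2 ≤ √(SS h) ^ 2 := by gcongr
    _ = SS h := Real.sq_sqrt (SS_nonneg h)

lemma SS_le_norm_sq {N : ℕ} (h : Fin N → P2) : SS h ≤ N * ‖h‖ ^ 2 := by
  unfold SS
  calc ∑ i, ‖h i‖ ^ 2 ≤ ∑ i : Fin N, ‖h‖ ^ 2 := by
        gcongr with i; exact norm_le_pi_norm h i
    _ = _ := by simp

lemma diff_sq_le_SS {N : ℕ} (h : Fin N → P2) (i j : Fin N) : ‖h i - h j‖ ^ 2 ≤ 4 * SS h := by
  have h1 := norm_sub_le (h i) (h j)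
  have h2 := le_SS h i
  have h3 := le_SS h j
  have h4 := norm_nonneg (h i - h j)
  nlinarith [sq_nonneg (‖h i‖ - ‖h j‖)]

/-- antisymmetric summation -/
lemma sum_antisymm {N : ℕ} (c : Fin N → Fin N → ℝ) (hc : ∀ i j, c i j = c j i) (q v : Fin N → P2) :
    ∑ i, ∑ j, c i j * inner ℝ (q i - q j) (v i - v j) =
      2 * ∑ i, inner ℝ (∑ j, c i j • (q i - q j)) (v i) := by
  have h1 : ∑ i, ∑ j, c i j * inner ℝ (q i - q j) (v j) =
      - ∑ i, ∑ j, c i j * inner ℝ (q i - q j) (v i) := by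
    rw [Finset.sum_comm, ← Finset.sum_neg_distrib]
    refine Finset.sum_congr rfl fun i _ => ?_
    rw [← Finset.sum_neg_distrib]
    refine Finset.sum_congr rfl fun j _ => ?_
    rw [hc j i, ← neg_sub (q i) (q j), inner_neg_left]; ring
  have h2 : ∑ i, inner ℝ (∑ j, c i j • (q i - q j)) (v i) =
      ∑ i, ∑ j, c i j * inner ℝ (q i - q j) (v i) := by
    refine Finset.sum_congr rfl fun i _ => ?_
    rw [sum_inner]
    refine Finset.sum_congr rfl fun j _ => ?_
    rw [real_inner_smul_left]
  simp only [inner_sub_right, mul_sub, Finset.sum_sub_distrib]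
  rw [h1, h2]; ring

lemma mulVec_stress {N : ℕ} (ω : Fin N → Fin N → ℝ) (u : Fin N → ℝ) (i : Fin N) :
    (stressMatrix ω *ᵥ u) i = ∑ j, ω i j * (u i - u j) := by
  simp only [Matrix.mulVec, dotProduct, stressMatrix, Matrix.of_apply]
  rw [← Finset.add_sum_erase _ _ (Finset.mem_univ i),
    ← Finset.add_sum_erase _ (fun j => ω i j * (u i - u j)) (Finset.mem_univ i)]
  simp only [if_true, sub_self, mul_zero, zero_add, Finset.sum_mul]
  rw [← Finset.sum_add_distrib]
  refine Finset.sum_congr rfl fun j hj => ?_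
  rw [if_neg (Finset.ne_of_mem_erase hj).symm]; ring

lemma quad_stress {N : ℕ} (ω : Fin N → Fin N → ℝ) (hω : ∀ i j, ω i j = ω j i) (h : Fin N → P2) :
    ∑ i, ∑ j, ω i j * ‖h i - h j‖ ^ 2 =
      2 * ((fun i => h i 0) ⬝ᵥ (stressMatrix ω *ᵥ (fun i => h i 0)) +
       (fun i => h i 1) ⬝ᵥ (stressMatrix ω *ᵥ (fun i => h i 1))) := by
  have := sum_antisymm ω hω h h
  simp only [real_inner_self_eq_norm_sq] at this
  rw [this]
  congr 1
  simp only [dotProduct, mulVec_stress, ← Finset.sum_add_distrib]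
  refine Finset.sum_congr rfl fun i _ => ?_
  rw [sum_inner, Finset.mul_sum, Finset.mul_sum, ← Finset.sum_add_distrib]
  refine Finset.sum_congr rfl fun j _ => ?_
  rw [real_inner_smul_left, inner_P2]
  simp; ring

/-- centered infinitesimal analysis -/
lemma kernel_trivial {N : ℕ} (qe e : Fin N → P2) (b0 : P2) (he : ∀ i, e i = qe i - b0)
    (ω κ : Fin N → Fin N → ℝ)
    (hωs : ∀ i j, ω i j = ω j i)
    (hΩ : (stressMatrix ω).PosSemidef)
    (hker : ∀ u : Fin N → ℝ, (stressMatrix ω) *ᵥ u = 0 →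
        u ∈ Submodule.span ℝ
          ({fun i => qe i 0, fun i => qe i 1, (1 : Fin N → ℝ)} : Set (Fin N → ℝ)))
    (hspan : ∀ A : Matrix (Fin 2) (Fin 2) ℝ, A.IsSymm →
      A ∈ Submodule.span ℝ
          {M : Matrix (Fin 2) (Fin 2) ℝ | ∃ i j : Fin N, ω i j ≠ 0 ∧
            M = Matrix.vecMulVec (fun k => qe i k - qe j k) (fun k => qe i k - qe j k)})
    (hκ : ∀ i j, 0 ≤ κ i j) (hκ' : ∀ i j, ω i j ≠ 0 → 0 < κ i j)
    (h : Fin N → P2) (h1 : ∑ i, h i = 0) (h2 : ∑ i, inner ℝ (h i) (JJ (e i)) = 0)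
    (hB : ∑ i, ∑ j, ω i j * ‖h i - h j‖ ^ 2 +
       ∑ i, ∑ j, κ i j * (inner ℝ (e i - e j) (h i - h j)) ^ 2 ≤ 0) : h = 0 := by
  rw [quad_stress ω hωs] at hB
  have p0 := hΩ.dotProduct_mulVec_nonneg (fun i => h i 0)
  have p1 := hΩ.dotProduct_mulVec_nonneg (fun i => h i 1)
  simp only [star_trivial] at p0 p1
  have pk : ∀ i j, 0 ≤ κ i j * (inner ℝ (e i - e j) (h i - h j)) ^ 2 :=
    fun i j => mul_nonneg (hκ i j) (sq_nonneg _)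
  have pk' : 0 ≤ ∑ i, ∑ j, κ i j * (inner ℝ (e i - e j) (h i - h j)) ^ 2 :=
    Finset.sum_nonneg fun i _ => Finset.sum_nonneg fun j _ => pk i j
  have z0 : (fun i => h i 0) ⬝ᵥ (stressMatrix ω *ᵥ (fun i => h i 0)) = 0 := by linarith
  have z1 : (fun i => h i 1) ⬝ᵥ (stressMatrix ω *ᵥ (fun i => h i 1)) = 0 := by linarith
  have zk : ∑ i, ∑ j, κ i j * (inner ℝ (e i - e j) (h i - h j)) ^ 2 = 0 := by linarith
  have w0 := hker _ ((hΩ.dotProduct_mulVec_zero_iff _).1 (by simpa using z0))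
  have w1 := hker _ ((hΩ.dotProduct_mulVec_zero_iff _).1 (by simpa using z1))
  rw [Submodule.mem_span_triple] at w0 w1
  obtain ⟨a00, a01, b0', w0⟩ := w0
  obtain ⟨a10, a11, b1', w1⟩ := w1
  have w0' : ∀ i, h i 0 = a00 * qe i 0 + a01 * qe i 1 + b0' := fun i => by
    have := congrFun w0 i; simpa using this.symm
  have w1' : ∀ i, h i 1 = a10 * qe i 0 + a11 * qe i 1 + b1' := fun i => by
    have := congrFun w1 i; simpa using this.symm
  have edge : ∀ i j, ω i j ≠ 0 → inner ℝ (e i - e j) (h i - h j) = 0 := by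
    intro i j hij
    rw [Finset.sum_eq_zero_iff_of_nonneg (fun i _ => Finset.sum_nonneg fun j _ => pk i j)] at zk
    have := zk i (Finset.mem_univ i)
    rw [Finset.sum_eq_zero_iff_of_nonneg (fun j _ => pk i j)] at this
    have := this j (Finset.mem_univ j)
    have hk := hκ' i j hij
    simpa [hk.ne'] using this
  let φ : Matrix (Fin 2) (Fin 2) ℝ →ₗ[ℝ] ℝ :=
    { toFun := fun M => a00 * M 0 0 + a01 * M 0 1 + a10 * M 1 0 + a11 * M 1 1
      map_add' := fun M M' => by simp; ring
      map_smul' := fun a M => by simp; ring }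
  have hφ : ∀ A : Matrix (Fin 2) (Fin 2) ℝ, A.IsSymm → φ A = 0 := by
    intro A hA
    have hle : Submodule.span ℝ
          {M : Matrix (Fin 2) (Fin 2) ℝ | ∃ i j : Fin N, ω i j ≠ 0 ∧
            M = Matrix.vecMulVec (fun k => qe i k - qe j k) (fun k => qe i k - qe j k)} ≤
        LinearMap.ker φ := by
      rw [Submodule.span_le]
      rintro M ⟨i, j, hij, rfl⟩
      have := edge i j hij
      rw [inner_P2] at this
      simp only [he, PiLp.sub_apply, w0', w1'] at this
      simp only [SetLike.mem_coe, LinearMap.mem_ker, φ, LinearMap.coe_mk, AddHom.coe_mk,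
        Matrix.vecMulVec_apply]
      linarith
    exact hle (hspan A hA)
  have e1 := hφ !![1, 0; 0, 0] (by ext i j; fin_cases i <;> fin_cases j <;> rfl)
  have e2 := hφ !![0, 0; 0, 1] (by ext i j; fin_cases i <;> fin_cases j <;> rfl)
  have e3 := hφ !![0, 1; 1, 0] (by ext i j; fin_cases i <;> fin_cases j <;> rfl)
  simp [φ] at e1 e2 e3
  have ha : a01 = -a10 := by linarith
  obtain ⟨d, hd⟩ : ∃ d : P2, ∀ i, h i = a10 • JJ (e i) + d := by
    refine ⟨!₂[b0', b1'] + a10 • JJ b0, fun i => ?_⟩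
    ext k; fin_cases k
    · simp [he, w0', e1, ha]; ring
    · simp [he, w1', e2]; ring
  have : SS h = 0 := by
    unfold SS
    have : ∀ i, ‖h i‖ ^ 2 = a10 * inner ℝ (h i) (JJ (e i)) + inner ℝ (h i) d := by
      intro i
      rw [← real_inner_self_eq_norm_sq]
      conv_lhs => rw [show inner ℝ (h i) (h i) = inner ℝ (h i) (a10 • JJ (e i) + d) by rw [← hd]]
      rw [inner_add_right, real_inner_smul_right]
    simp only [this, Finset.sum_add_distrib, ← Finset.mul_sum, h2, ← sum_inner, h1]
    simp
  ext1 i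
  have hi := le_SS h i
  rw [this] at hi
  have : ‖h i‖ = 0 := by nlinarith [norm_nonneg (h i)]
  simpa using this

noncomputable def BB {N : ℕ} (ω κ : Fin N → Fin N → ℝ) (e h : Fin N → P2) : ℝ :=
  ∑ i, ∑ j, ω i j * ‖h i - h j‖ ^ 2 +
       ∑ i, ∑ j, κ i j * (inner ℝ (e i - e j) (h i - h j)) ^ 2

lemma BB_smul {N : ℕ} (ω κ : Fin N → Fin N → ℝ) (e h : Fin N → P2) (a : ℝ) :
    BB ω κ e (a • h) = a ^ 2 * BB ω κ e h := by
  unfold BB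
  rw [mul_add, Finset.mul_sum, Finset.mul_sum]
  simp only [Finset.mul_sum, Pi.smul_apply, ← smul_sub, norm_smul, real_inner_smul_right, mul_pow,
    Real.norm_eq_abs, sq_abs]
  congr 1 <;> refine Finset.sum_congr rfl fun i _ => Finset.sum_congr rfl fun j _ => ?_ <;> ring

lemma coercive {N : ℕ} (ω κ : Fin N → Fin N → ℝ) (e : Fin N → P2)
    (hpos : ∀ h : Fin N → P2, ∑ i, h i = 0 → ∑ i, inner ℝ (h i) (JJ (e i)) = 0 →
      BB ω κ e h ≤ 0 → h = 0) :
    ∃ c > 0, ∀ h : Fin N → P2, ∑ i, h i = 0 → ∑ i, inner ℝ (h i) (JJ (e i)) = 0 →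
      c * SS h ≤ BB ω κ e h := by
  set K : Set (Fin N → P2) := Metric.sphere 0 1 ∩
    ({h | ∑ i, h i = 0} ∩ {h | ∑ i, inner ℝ (h i) (JJ (e i)) = 0}) with hK
  have hcomp : IsCompact K := by
    refine (isCompact_sphere _ _).inter_right (IsClosed.inter ?_ ?_)
    · exact isClosed_eq (by fun_prop) continuous_const
    · exact isClosed_eq (by fun_prop) continuous_const
  have hcont : Continuous (BB ω κ e) := by unfold BB; fun_prop
  have key : ∃ c > 0, ∀ h ∈ K, c ≤ BB ω κ e h := by
    rcases K.eq_empty_or_nonempty with hE | hne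
    · exact ⟨1, one_pos, by simp [hE]⟩
    · obtain ⟨h0, h0K, hmin⟩ := hcomp.exists_isMinOn hne hcont.continuousOn
      refine ⟨BB ω κ e h0, ?_, fun h hh => hmin hh⟩
      by_contra hcon
      have := hpos h0 h0K.2.1 h0K.2.2 (not_lt.1 hcon)
      have h1 := h0K.1
      rw [this] at h1
      simp at h1
  obtain ⟨c, hc, hK'⟩ := key
  refine ⟨c / (N + 1), by positivity, fun h h1 h2 => ?_⟩
  by_cases hz : h = 0
  · subst hz; simp [SS, BB]
  have hn : 0 < ‖h‖ := norm_pos_iff.2 hz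
  have := hK' (‖h‖⁻¹ • h) ⟨by simp [norm_smul, hn.ne'], by simp [← Finset.smul_sum, h1],
    by simp [real_inner_smul_left, ← Finset.mul_sum, h2]⟩
  rw [BB_smul] at this
  have h3 : c * ‖h‖ ^ 2 ≤ BB ω κ e h := by
    have h4 : c * ‖h‖ ^ 2 ≤ ((‖h‖⁻¹) ^ 2 * BB ω κ e h) * ‖h‖ ^ 2 := by gcongr
    calc _ ≤ _ := h4
      _ = _ := by field_simp
  have h5 := SS_le_norm_sq h
  calc c / (N + 1) * SS h ≤ c / (N + 1) * ((N + 1) * ‖h‖ ^ 2) := by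
        gcongr; nlinarith [sq_nonneg ‖h‖]
    _ = c * ‖h‖ ^ 2 := by field_simp
    _ ≤ _ := h3

noncomputable def rot (c s : ℝ) (v : P2) : P2 := c • v + s • JJ v

lemma inner_rot (c s : ℝ) (v w : P2) : inner ℝ (rot c s v) w = inner ℝ v (rot c (-s) w) := by
  simp only [inner_P2, rot]; simp; ring

lemma norm_rot (c s : ℝ) (hcs : c ^ 2 + s ^ 2 = 1) (v : P2) : ‖rot c s v‖ = ‖v‖ := by
  rw [← sq_eq_sq₀ (norm_nonneg _) (norm_nonneg _), normsq_P2, normsq_P2]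
  simp only [rot]; simp
  linear_combination (v 0 ^ 2 + v 1 ^ 2) * hcs

lemma rot_sub (c s : ℝ) (v w : P2) : rot c s (v - w) = rot c s v - rot c s w := by
  simp [rot, smul_sub]; abel

lemma rot_sum {N : ℕ} (c s : ℝ) (h : Fin N → P2) : rot c s (∑ i, h i) = ∑ i, rot c s (h i) := by
  simp [rot, Finset.sum_add_distrib, Finset.smul_sum]

lemma rot_JJ (c s : ℝ) (v : P2) : rot c s (JJ v) = JJ (rot c s v) := by
  simp [rot]

lemma coercive_rot {N : ℕ} (ω κ : Fin N → Fin N → ℝ) (e : Fin N → P2) (a : ℝ)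
    (hpos : ∀ h : Fin N → P2, ∑ i, h i = 0 → ∑ i, inner ℝ (h i) (JJ (e i)) = 0 →
      a * SS h ≤ BB ω κ e h) (c s : ℝ) (hcs : c ^ 2 + s ^ 2 = 1) (t : P2)
      (m h : Fin N → P2) (hm : ∀ i, m i = rot c s (e i) + t)
      (h1 : ∑ i, h i = 0) (h2 : ∑ i, inner ℝ (h i) (JJ (rot c s (e i))) = 0) :
      a * SS h ≤ BB ω κ m h := by
  have hcs' : c ^ 2 + (-s) ^ 2 = 1 := by simpa using hcs
  have := hpos (fun i => rot c (-s) (h i)) (by rw [← rot_sum, h1]; simp [rot]) (by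
    rw [← h2]
    refine Finset.sum_congr rfl fun i _ => ?_
    rw [inner_rot, rot_JJ]; simp)
  have e1 : SS (fun i => rot c (-s) (h i)) = SS h := by simp [SS, norm_rot _ _ hcs']
  have e2 : BB ω κ e (fun i => rot c (-s) (h i)) = BB ω κ m h := by
    simp [BB, ← rot_sub, norm_rot _ _ hcs', hm, inner_rot]
  rwa [e1, e2] at this

/-- Procrustes alignment. -/
lemma procrustes {N : ℕ} (hN : 0 < N) (e : Fin N → P2) (he : ∑ i, e i = 0) (q : Fin N → P2) :
    ∃ c s : ℝ, ∃ t : P2, c ^ 2 + s ^ 2 = 1 ∧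
      ∑ i, (q i - (rot c s (e i) + t)) = 0 ∧
      ∑ i, inner ℝ (q i - (rot c s (e i) + t)) (JJ (rot c s (e i))) = 0 ∧
      ∀ c' s' : ℝ, ∀ t' : P2, c' ^ 2 + s' ^ 2 = 1 →
        SS (fun i => q i - (rot c s (e i) + t)) ≤ SS (fun i => q i - (rot c' s' (e i) + t')) := by
  set a := ∑ i, inner ℝ (q i) (e i) with ha
  set b := ∑ i, inner ℝ (q i) (JJ (e i)) with hb
  obtain ⟨c, s, hcs, hab, hmax⟩ : ∃ c s : ℝ, c ^ 2 + s ^ 2 = 1 ∧ c * b - s * a = 0 ∧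
      ∀ c' s' : ℝ, c' ^ 2 + s' ^ 2 = 1 → c' * a + s' * b ≤ c * a + s * b := by
    by_cases h0 : a ^ 2 + b ^ 2 = 0
    · have ha0 : a = 0 := by nlinarith [sq_nonneg a, sq_nonneg b]
      have hb0 : b = 0 := by nlinarith [sq_nonneg a, sq_nonneg b]
      exact ⟨1, 0, by norm_num, by simp [hb0], by simp [ha0, hb0]⟩
    · have hp : 0 < a ^ 2 + b ^ 2 := lt_of_le_of_ne (by positivity) (Ne.symm h0)
      set r := √(a ^ 2 + b ^ 2) with hr
      have hr0 : 0 < r := Real.sqrt_pos.2 hp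
      have hr2 : r ^ 2 = a ^ 2 + b ^ 2 := Real.sq_sqrt hp.le
      refine ⟨a / r, b / r, ?_, ?_, ?_⟩
      · field_simp; linarith
      · ring
      · intro c' s' h'
        have : a / r * a + b / r * b = r := by field_simp; linarith
        rw [this]
        refine abs_le_of_sq_le_sq' ?_ hr0.le |>.2
        rw [hr2]
        nlinarith [sq_nonneg (c' * b - s' * a)]
  set t : P2 := (N : ℝ)⁻¹ • ∑ i, q i with ht
  have hNt : (N : ℝ) • t = ∑ i, q i := by
    rw [ht, smul_smul, mul_inv_cancel₀ (by positivity), one_smul]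
  clear_value t
  have hrot : ∀ c s : ℝ, ∑ i, rot c s (e i) = 0 := by
    intro c s; rw [← rot_sum, he]; simp [rot]
  have h1 : ∑ i, (q i - (rot c s (e i) + t)) = 0 := by
    rw [Finset.sum_sub_distrib, Finset.sum_add_distrib, hrot, ← hNt]
    simp [← Nat.cast_smul_eq_nsmul ℝ]
  have hJ : ∀ v : P2, inner ℝ v (JJ v) = 0 := by intro v; rw [inner_P2]; simp; ring
  have hqrot : ∀ c s : ℝ, ∑ i, inner ℝ (q i) (rot c s (e i)) = c * a + s * b := by
    intro c s
    rw [ha, hb, Finset.mul_sum, Finset.mul_sum, ← Finset.sum_add_distrib]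
    simp only [rot, inner_add_right, real_inner_smul_right]
  refine ⟨c, s, t, hcs, h1, ?_, ?_⟩
  · have : ∀ i, inner ℝ (q i - (rot c s (e i) + t)) (JJ (rot c s (e i))) =
        inner ℝ (q i) (rot (-s) c (e i)) - inner ℝ t (JJ (rot c s (e i))) := by
      intro i
      rw [inner_sub_left, inner_add_left, hJ]
      have : JJ (rot c s (e i)) = rot (-s) c (e i) := by
        ext k; fin_cases k <;> simp [rot] <;> ring
      rw [this]; ring
    rw [Finset.sum_congr rfl fun i _ => this i, Finset.sum_sub_distrib, hqrot, ← inner_sum,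
      ← map_sum, hrot]
    simp; linarith
  · intro c' s' t' h'
    have expand : ∀ c s : ℝ, ∀ t : P2, c ^ 2 + s ^ 2 = 1 → SS (fun i => q i - (rot c s (e i) + t)) =
        SS q + SS e - 2 * (c * a + s * b) + (N * ‖t‖ ^ 2 - 2 * inner ℝ (∑ i, q i) t) := by
      intro c s t hcs
      have : ∀ i, ‖q i - (rot c s (e i) + t)‖ ^ 2 = ‖q i‖ ^ 2 + ‖e i‖ ^ 2 -
          2 * inner ℝ (q i) (rot c s (e i)) + (‖t‖ ^ 2 - 2 * inner ℝ (q i) t) +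
          2 * inner ℝ (rot c s (e i)) t := by
        intro i
        rw [norm_sub_sq_real, norm_add_sq_real, norm_rot _ _ hcs, inner_add_right]; ring
      unfold SS
      rw [Finset.sum_congr rfl fun i _ => this i]
      simp only [Finset.sum_add_distrib, Finset.sum_sub_distrib, ← Finset.mul_sum, hqrot,
        ← sum_inner, hrot]
      simp
    rw [expand c s t hcs, expand c' s' t' h']
    have hm := hmax c' s' h'
    rw [← hNt]
    have : 0 ≤ (N : ℝ) * ‖t' - t‖ ^ 2 := by positivity
    rw [norm_sub_sq_real] at this
    rw [real_inner_smul_left, real_inner_smul_left, real_inner_self_eq_norm_sq,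
      real_inner_comm t' t]
    linarith

noncomputable def Frc {N : ℕ} (ω κ : Fin N → Fin N → ℝ) (e q : Fin N → P2) : Fin N → P2 :=
  fun i => ∑ j, (ω i j + κ i j * (1 - ‖e i - e j‖ / ‖q i - q j‖)) • (q i - q j)

noncomputable def UU {N : ℕ} (ω κ : Fin N → Fin N → ℝ) (e q : Fin N → P2) : ℝ :=
  (1 / 4) * ∑ i, ∑ j, (ω i j * ‖q i - q j‖ ^ 2 + κ i j * (‖q i - q j‖ - ‖e i - e j‖) ^ 2)

lemma edge1 (d m : P2) (R0 η : ℝ) (hR : 0 < R0) (hm : ‖m‖ ≤ R0) (hη : ‖d - m‖ ≤ η) (hη' : η ≤ R0) :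
    2 / (9 * R0 ^ 2) * (inner ℝ m (d - m)) ^ 2 - η ^ 2 / (9 * R0 ^ 2) * ‖d - m‖ ^ 2 ≤
      (‖d‖ - ‖m‖) ^ 2 := by
  have hd : ‖d‖ ≤ ‖m‖ + ‖d - m‖ := by
    have := norm_add_le m (d - m); simpa using this
  have h1 : ‖d‖ ^ 2 = ‖m‖ ^ 2 + 2 * inner ℝ m (d - m) + ‖d - m‖ ^ 2 := by
    have := norm_add_sq_real m (d - m); simpa using this
  set x := inner ℝ m (d - m)
  set y := ‖d - m‖
  have hy : 0 ≤ y := norm_nonneg _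
  have h0 : 0 ≤ ‖d‖ := norm_nonneg _
  have h0' : 0 ≤ ‖m‖ := norm_nonneg _
  have e1 : (‖d‖ - ‖m‖) * (‖d‖ + ‖m‖) = 2 * x + y ^ 2 := by linear_combination h1
  have e2 : (2 * x + y ^ 2) ^ 2 ≤ (‖d‖ - ‖m‖) ^ 2 * (9 * R0 ^ 2) := by
    rw [← e1, mul_pow]
    have : (‖d‖ + ‖m‖) ^ 2 ≤ (3 * R0) ^ 2 := by
      apply pow_le_pow_left₀ (by positivity); linarith
    calc _ ≤ (‖d‖ - ‖m‖) ^ 2 * (3 * R0) ^ 2 := by gcongr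
      _ = _ := by ring
  have e3 : 2 * x ^ 2 - y ^ 2 * y ^ 2 ≤ (2 * x + y ^ 2) ^ 2 := by nlinarith [sq_nonneg (x + y ^ 2)]
  have e4 : y ^ 2 * y ^ 2 ≤ η ^ 2 * y ^ 2 := by gcongr
  have : 2 / (9 * R0 ^ 2) * x ^ 2 - η ^ 2 / (9 * R0 ^ 2) * y ^ 2 =
    (2 * x ^ 2 - η ^ 2 * y ^ 2) / (9 * R0 ^ 2) := by ring
  rw [this, div_le_iff₀ (by positivity)]
  linarith

lemma edge2 (d m : P2) (r0 η : ℝ) (hr0 : 0 < r0) (hd : r0 / 2 ≤ ‖d‖) (hη : ‖d - m‖ ≤ η) :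
    (‖d‖ - ‖m‖) ^ 2 - η / r0 * ‖d - m‖ ^ 2 ≤
      (1 - ‖m‖ / ‖d‖) * inner ℝ d (d - m) := by
  have hdm : |‖d‖ - ‖m‖| ≤ ‖d - m‖ := abs_norm_sub_norm_le d m
  have h1 : ‖d - m‖ ^ 2 = ‖d‖ ^ 2 - 2 * inner ℝ d m + ‖m‖ ^ 2 := norm_sub_sq_real d m
  rw [inner_sub_right, real_inner_self_eq_norm_sq]
  set x := inner ℝ d m
  set y := ‖d - m‖
  set r := ‖d‖
  set k := ‖m‖
  have hy : 0 ≤ y := norm_nonneg _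
  have hr : 0 < r := by linarith
  have e1 : (1 - k / r) * (r ^ 2 - x) = (r - k) ^ 2 + (r - k) * (y ^ 2 - (r - k) ^ 2) / (2 * r) := by
    have : x = (r ^ 2 + k ^ 2 - y ^ 2) / 2 := by linarith
    rw [this]; field_simp; ring
  rw [e1]
  have e2 : (r - k) ^ 2 ≤ y ^ 2 := by rw [← sq_abs (r - k)]; gcongr
  have e3 : -(y * y ^ 2) ≤ (r - k) * (y ^ 2 - (r - k) ^ 2) := by
    have := neg_le_of_abs_le hdm
    have h4 : 0 ≤ y ^ 2 - (r - k) ^ 2 := by linarith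
    nlinarith [mul_nonneg hy (sq_nonneg (r - k))]
  have e4 : -(η / r0 * y ^ 2) ≤ (r - k) * (y ^ 2 - (r - k) ^ 2) / (2 * r) := by
    rw [le_div_iff₀ (by positivity)]
    have : y * y ^ 2 ≤ η / r0 * y ^ 2 * (2 * r) := by
      have h5 : 1 ≤ 2 * r / r0 := by rw [le_div_iff₀ hr0]; linarith
      calc y * y ^ 2 ≤ η * y ^ 2 * 1 := by rw [mul_one]; gcongr
        _ ≤ η * y ^ 2 * (2 * r / r0) := by
          have : 0 ≤ η := hy.trans hη
          gcongr
        _ = _ := by ring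
    linarith
  linarith

lemma edge3 (d m : P2) (hd : d ≠ 0) : ‖(1 - ‖m‖ / ‖d‖) • d‖ ≤ ‖d - m‖ := by
  have hr : 0 < ‖d‖ := norm_pos_iff.2 hd
  rw [norm_smul, Real.norm_eq_abs, ← abs_of_pos hr, ← abs_mul, abs_of_pos hr]
  have : (1 - ‖m‖ / ‖d‖) * ‖d‖ = ‖d‖ - ‖m‖ := by field_simp
  rw [this]; exact abs_norm_sub_norm_le d m

lemma sum_sum_le {N : ℕ} (a : Fin N → Fin N → ℝ) (A : ℝ) (hA : 0 ≤ A) (ha : ∀ i j, a i j ≤ A)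
    (h : Fin N → P2) :
    ∑ i, ∑ j, a i j * ‖h i - h j‖ ^ 2 ≤ A * N ^ 2 * 4 * SS h := by
  calc ∑ i, ∑ j, a i j * ‖h i - h j‖ ^ 2 ≤ ∑ i : Fin N, ∑ j : Fin N, A * (4 * SS h) := by
        gcongr with i _ j _
        · exact ha i j
        · exact diff_sq_le_SS h i j
    _ = _ := by simp; ring

section loc
variable {N : ℕ} (ω κ : Fin N → Fin N → ℝ) (e m h : Fin N → P2)

lemma UU_eq (hωs : ∀ i j, ω i j = ω j i) (hm : ∀ i, ∑ j, ω i j • (m i - m j) = 0)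
    :
    4 * UU ω κ e (m + h) = ∑ i, ∑ j, ω i j * ‖h i - h j‖ ^ 2 +
      ∑ i, ∑ j, κ i j * (‖(m + h) i - (m + h) j‖ - ‖e i - e j‖) ^ 2 := by
  have h1 := sum_antisymm ω hωs m m
  have h2 := sum_antisymm ω hωs m h
  simp only [hm, inner_zero_left, Finset.sum_const_zero, mul_zero, real_inner_self_eq_norm_sq] at h1 h2
  unfold UU
  have h3 : ∀ i j, ω i j * ‖(m + h) i - (m + h) j‖ ^ 2 = ω i j * ‖m i - m j‖ ^ 2 +
      2 * (ω i j * inner ℝ (m i - m j) (h i - h j)) + ω i j * ‖h i - h j‖ ^ 2 := by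
    intro i j
    rw [show (m + h) i - (m + h) j = (m i - m j) + (h i - h j) by simp; abel, norm_add_sq_real]
    ring
  simp only [Finset.sum_add_distrib, h3, ← Finset.mul_sum, h1, h2]
  ring

lemma Frc_inner (hωs : ∀ i j, ω i j = ω j i) (hκs : ∀ i j, κ i j = κ j i) (q v : Fin N → P2) :
    2 * ∑ i, inner ℝ (Frc ω κ e q i) (v i) =
     ∑ i, ∑ j, (ω i j + κ i j * (1 - ‖e i - e j‖ / ‖q i - q j‖)) * inner ℝ (q i - q j) (v i - v j) := by
  rw [sum_antisymm (fun i j => ω i j + κ i j * (1 - ‖e i - e j‖ / ‖q i - q j‖))]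
  · rfl
  · intro i j
    simp only [hωs i j, hκs i j, norm_sub_rev (e i), norm_sub_rev (q i)]

lemma UU_lower (hωs : ∀ i j, ω i j = ω j i) (hm : ∀ i, ∑ j, ω i j • (m i - m j) = 0)
    (hme : ∀ i j, ‖m i - m j‖ = ‖e i - e j‖)
    (R0 η c Bk : ℝ) (hR : 0 < R0) (hmR : ∀ i j, ‖e i - e j‖ ≤ R0) (hη : ∀ i j, ‖h i - h j‖ ≤ η)
    (hη' : η ≤ R0) (hκ : ∀ i j, 0 ≤ κ i j) (hBk : 0 ≤ Bk) (hκB : ∀ i j, κ i j ≤ Bk)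
    (hc : c * SS h ≤ BB ω (fun i j => 2 / (9 * R0 ^ 2) * κ i j) m h)
    (hηc : η ^ 2 / (9 * R0 ^ 2) * (Bk * N ^ 2 * 4) ≤ c / 2) :
    c / 8 * SS h ≤ UU ω κ e (m + h) := by
  have h1 := UU_eq ω κ e m h hωs hm
  have h2 : ∀ i j, 2 / (9 * R0 ^ 2) * κ i j * (inner ℝ (m i - m j) (h i - h j)) ^ 2 -
     η ^ 2 / (9 * R0 ^ 2) * (κ i j * ‖h i - h j‖ ^ 2) ≤
     κ i j * (‖(m + h) i - (m + h) j‖ - ‖e i - e j‖) ^ 2 := by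
    intro i j
    have e0 : (m + h) i - (m + h) j - (m i - m j) = h i - h j := by simp; abel
    have := edge1 ((m + h) i - (m + h) j) (m i - m j) R0 η hR (by rw [hme]; exact hmR i j)
      (by rw [e0]; exact hη i j) hη'
    rw [e0, hme] at this
    have := mul_le_mul_of_nonneg_left this (hκ i j)
    linarith
  have h3 := Finset.sum_le_sum fun i (_ : i ∈ Finset.univ) =>
    Finset.sum_le_sum fun j (_ : j ∈ Finset.univ) => h2 i j
  simp only [Finset.sum_sub_distrib, ← Finset.mul_sum] at h3
  have h4 := sum_sum_le κ Bk hBk hκB h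
  have h5 : η ^ 2 / (9 * R0 ^ 2) * ∑ i, ∑ j, κ i j * ‖h i - h j‖ ^ 2 ≤ c / 2 * SS h := by
    calc _ ≤ η ^ 2 / (9 * R0 ^ 2) * (Bk * N ^ 2 * 4 * SS h) := by gcongr
      _ = η ^ 2 / (9 * R0 ^ 2) * (Bk * N ^ 2 * 4) * SS h := by ring
      _ ≤ _ := by gcongr; exact SS_nonneg h
  unfold BB at hc
  linarith

lemma UU_upper (hωs : ∀ i j, ω i j = ω j i) (hm : ∀ i, ∑ j, ω i j • (m i - m j) = 0)
    (hme : ∀ i j, ‖m i - m j‖ = ‖e i - e j‖)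
    (Bw Bk : ℝ) (hκ : ∀ i j, 0 ≤ κ i j) (hBk : 0 ≤ Bk) (hκB : ∀ i j, κ i j ≤ Bk)
    (hBw : 0 ≤ Bw) (hωB : ∀ i j, |ω i j| ≤ Bw) :
    UU ω κ e (m + h) ≤ (Bw + Bk) * N ^ 2 * SS h := by
  have h1 := UU_eq ω κ e m h hωs hm
  have h2 : ∀ i j, κ i j * (‖(m + h) i - (m + h) j‖ - ‖e i - e j‖) ^ 2 ≤ κ i j * ‖h i - h j‖ ^ 2 := by
    intro i j
    have e0 : (m + h) i - (m + h) j - (m i - m j) = h i - h j := by simp; abel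
    refine mul_le_mul_of_nonneg_left ?_ (hκ i j)
    rw [← hme, ← e0, ← sq_abs (_ - _)]
    gcongr
    exact abs_norm_sub_norm_le _ _
  have h3 := Finset.sum_le_sum fun i (_ : i ∈ Finset.univ) =>
    Finset.sum_le_sum fun j (_ : j ∈ Finset.univ) => h2 i j
  have h4 := sum_sum_le κ Bk hBk hκB h
  have h5 := sum_sum_le ω Bw hBw (fun i j => (le_abs_self _).trans (hωB i j)) h
  linarith

lemma Frc_lower (hωs : ∀ i j, ω i j = ω j i) (hκs : ∀ i j, κ i j = κ j i)
    (hm : ∀ i, ∑ j, ω i j • (m i - m j) = 0)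
    (hme : ∀ i j, ‖m i - m j‖ = ‖e i - e j‖)
    (r0 η c Bk : ℝ) (hr0 : 0 < r0) (hd : ∀ i j, i ≠ j → r0 / 2 ≤ ‖(m + h) i - (m + h) j‖)
    (hη : ∀ i j, ‖h i - h j‖ ≤ η) (hη0 : 0 ≤ η)
    (hκ : ∀ i j, 0 ≤ κ i j) (hBk : 0 ≤ Bk) (hκB : ∀ i j, κ i j ≤ Bk)
    (hc0 : 0 < c)
    (hc : c * SS h ≤ UU ω κ e (m + h))
    (hηc : η / r0 * (Bk * N ^ 2 * 4) ≤ c) :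
    c ^ 2 * SS h ≤ SS (Frc ω κ e (m + h)) := by
  have h1 := UU_eq ω κ e m h hωs hm
  have h6 := Frc_inner ω κ e hωs hκs (m + h) h
  have h2 := sum_antisymm ω hωs m h
  simp only [hm, inner_zero_left, Finset.sum_const_zero, mul_zero] at h2
  have h7 : ∀ i j, (ω i j * inner ℝ (m i - m j) (h i - h j) + ω i j * ‖h i - h j‖ ^ 2) +
     κ i j * (‖(m + h) i - (m + h) j‖ - ‖e i - e j‖) ^ 2 - η / r0 * (κ i j * ‖h i - h j‖ ^ 2) ≤
     (ω i j + κ i j * (1 - ‖e i - e j‖ / ‖(m + h) i - (m + h) j‖)) *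
       inner ℝ ((m + h) i - (m + h) j) (h i - h j) := by
    intro i j
    by_cases hij : i = j
    · subst hij; simp
    have e0 : (m + h) i - (m + h) j - (m i - m j) = h i - h j := by simp; abel
    have := edge2 ((m + h) i - (m + h) j) (m i - m j) r0 η hr0 (hd i j hij)
      (by rw [e0]; exact hη i j)
    rw [e0, hme] at this
    have := mul_le_mul_of_nonneg_left this (hκ i j)
    have e1 : inner ℝ ((m + h) i - (m + h) j) (h i - h j) =
        inner ℝ (m i - m j) (h i - h j) + ‖h i - h j‖ ^ 2 := by
      rw [← real_inner_self_eq_norm_sq, ← inner_add_left]; congr 1; simp; abel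
    have e2 : ω i j * inner ℝ ((m + h) i - (m + h) j) (h i - h j) =
        ω i j * inner ℝ (m i - m j) (h i - h j) + ω i j * ‖h i - h j‖ ^ 2 := by
      rw [e1]; ring
    rw [← e2]
    linarith
  have h3 := Finset.sum_le_sum fun i (_ : i ∈ Finset.univ) =>
    Finset.sum_le_sum fun j (_ : j ∈ Finset.univ) => h7 i j
  simp only [Finset.sum_sub_distrib, Finset.sum_add_distrib, ← Finset.mul_sum] at h3
  rw [← h6, h2] at h3
  have h4 := sum_sum_le κ Bk hBk hκB h
  have h5 : η / r0 * ∑ i, ∑ j, κ i j * ‖h i - h j‖ ^ 2 ≤ c * SS h := by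
    calc _ ≤ η / r0 * (Bk * N ^ 2 * 4 * SS h) := by gcongr
      _ = η / r0 * (Bk * N ^ 2 * 4) * SS h := by ring
      _ ≤ _ := by gcongr; exact SS_nonneg h
  have h8 : c * SS h ≤ ∑ i, inner ℝ (Frc ω κ e (m + h) i) (h i) := by
    linarith [mul_nonneg hc0.le (SS_nonneg h)]
  have h9 : 2 * c * ∑ i, inner ℝ (Frc ω κ e (m + h) i) (h i) ≤
      SS (Frc ω κ e (m + h)) + c ^ 2 * SS h := by
    unfold SS
    rw [Finset.mul_sum, Finset.mul_sum, ← Finset.sum_add_distrib]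
    refine Finset.sum_le_sum fun i _ => ?_
    have := real_inner_le_norm (Frc ω κ e (m + h) i) (h i)
    nlinarith [sq_nonneg (‖Frc ω κ e (m + h) i‖ - c * ‖h i‖), mul_le_mul_of_nonneg_left this hc0.le]
  nlinarith [mul_le_mul_of_nonneg_left h8 hc0.le]

lemma SS_sum_le (f : Fin N → Fin N → P2) (A : ℝ) (hA : 0 ≤ A)
    (hf : ∀ i j, ‖f i j‖ ≤ A * ‖h i - h j‖) :
    SS (fun i => ∑ j, f i j) ≤ N ^ 3 * A ^ 2 * 4 * SS h := by
  have hs : ∀ i j, ‖h i - h j‖ ≤ √(4 * SS h) := fun i j =>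
    Real.le_sqrt_of_sq_le (diff_sq_le_SS h i j)
  have h1 : ∀ i, ‖∑ j, f i j‖ ≤ N * (A * √(4 * SS h)) := by
    intro i
    calc _ ≤ ∑ j, ‖f i j‖ := norm_sum_le _ _
      _ ≤ ∑ j : Fin N, (A * √(4 * SS h)) := by
        gcongr with j
        exact (hf i j).trans (by gcongr; exact hs i j)
      _ = _ := by simp
  unfold SS at *
  calc _ ≤ ∑ i : Fin N, (N * (A * √(4 * ∑ i, ‖h i‖ ^ 2))) ^ 2 := by
        gcongr with i; exact h1 i
    _ = _ := by
      simp only [mul_pow]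
      rw [Real.sq_sqrt (by positivity)]
      simp; ring

lemma Frc_upper (hm : ∀ i, ∑ j, ω i j • (m i - m j) = 0)
    (hme : ∀ i j, ‖m i - m j‖ = ‖e i - e j‖)
    (hd : ∀ i j, i ≠ j → (m + h) i ≠ (m + h) j)
    (Bw Bk : ℝ) (hκ : ∀ i j, 0 ≤ κ i j) (hBk : 0 ≤ Bk) (hκB : ∀ i j, κ i j ≤ Bk)
    (hBw : 0 ≤ Bw) (hωB : ∀ i j, |ω i j| ≤ Bw) :
    SS (Frc ω κ e (m + h)) ≤ N ^ 3 * (Bw + Bk) ^ 2 * 4 * SS h := by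
  have : Frc ω κ e (m + h) = fun i => ∑ j, (ω i j • (h i - h j) +
      κ i j • ((1 - ‖e i - e j‖ / ‖(m + h) i - (m + h) j‖) • ((m + h) i - (m + h) j))) := by
    ext1 i
    unfold Frc
    have := hm i
    rw [← sub_zero (∑ j, _), ← this, ← Finset.sum_sub_distrib]
    refine Finset.sum_congr rfl fun j _ => ?_
    rw [add_smul, smul_smul]
    rw [show (m + h) i - (m + h) j = (m i - m j) + (h i - h j) by simp; abel]
    rw [smul_add (ω i j)]; abel
  rw [this]
  refine SS_sum_le h _ _ (by positivity) fun i j => ?_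
  by_cases hij : i = j
  · subst hij; simp
  have e0 : (m + h) i - (m + h) j - (m i - m j) = h i - h j := by simp; abel
  have e3 := edge3 ((m + h) i - (m + h) j) (m i - m j) (sub_ne_zero.2 (hd i j hij))
  rw [e0, hme] at e3
  refine (norm_add_le _ _).trans ?_
  rw [norm_smul, norm_smul (κ i j), add_mul, Real.norm_eq_abs, Real.norm_eq_abs, abs_of_nonneg (hκ i j)]
  gcongr
  · exact hωB i j
  · exact hκB i j

end loc

lemma hasDerivAt_norm_P2 (d : ℝ → P2) (d' : P2) (t : ℝ) (hd : HasDerivAt d d' t) (h0 : d t ≠ 0) :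
    HasDerivAt (fun t => ‖d t‖) (inner ℝ (d t) d' / ‖d t‖) t := by
  have h1 := hd.norm_sq
  have hr : 0 < ‖d t‖ := norm_pos_iff.2 h0
  have h2 := h1.sqrt (by positivity)
  simp only [Real.sqrt_sq (norm_nonneg _)] at h2
  convert h2 using 1
  field_simp

lemma hasDerivAt_edge (d : ℝ → P2) (d' : P2) (t k : ℝ) (hd : HasDerivAt d d' t) (h0 : d t ≠ 0) :
    HasDerivAt (fun t => (1 - k / ‖d t‖) • d t)
      ((1 - k / ‖d t‖) • d' + (k * (inner ℝ (d t) d' / ‖d t‖) / ‖d t‖ ^ 2) • d t) t := by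
  have hr : 0 < ‖d t‖ := norm_pos_iff.2 h0
  have h1 := hasDerivAt_norm_P2 d d' t hd h0
  have h2 : HasDerivAt (fun t => 1 - k / ‖d t‖) (k * (inner ℝ (d t) d' / ‖d t‖) / ‖d t‖ ^ 2) t := by
    have := ((hasDerivAt_const t k).div h1 hr.ne').const_sub 1
    refine this.congr_deriv ?_
    ring
  exact h2.smul hd

lemma edge_deriv_bound (d d' : P2) (k r0 R0 : ℝ) (hk : 0 ≤ k) (hkR : k ≤ R0) (hr0 : 0 < r0)
    (hd : r0 / 2 ≤ ‖d‖) :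
    ‖(1 - k / ‖d‖) • d' + (k * (inner ℝ d d' / ‖d‖) / ‖d‖ ^ 2) • d‖ ≤ (1 + 4 * R0 / r0) * ‖d'‖ := by
  have hr : 0 < ‖d‖ := by linarith
  have h1 : k / ‖d‖ ≤ 2 * R0 / r0 := by
    rw [div_le_div_iff₀ hr hr0]
    nlinarith
  have h0 : 0 ≤ k / ‖d‖ := by positivity
  have h2 : ‖(1 - k / ‖d‖) • d'‖ ≤ (1 + 2 * R0 / r0) * ‖d'‖ := by
    rw [norm_smul]
    gcongr
    rw [Real.norm_eq_abs, abs_le]; constructor <;> linarith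
  have h3 : ‖(k * (inner ℝ d d' / ‖d‖) / ‖d‖ ^ 2) • d‖ ≤ (2 * R0 / r0) * ‖d'‖ := by
    rw [norm_smul, Real.norm_eq_abs, abs_div, abs_mul, abs_div, abs_of_nonneg hk, abs_of_pos hr,
      abs_of_nonneg (by positivity : 0 ≤ ‖d‖ ^ 2)]
    have := abs_real_inner_le_norm d d'
    calc k * (|inner ℝ d d'| / ‖d‖) / ‖d‖ ^ 2 * ‖d‖ ≤ k * ((‖d‖ * ‖d'‖) / ‖d‖) / ‖d‖ ^ 2 * ‖d‖ := by
          gcongr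
      _ = k / ‖d‖ * ‖d'‖ := by field_simp
      _ ≤ _ := by gcongr
  calc _ ≤ _ := norm_add_le _ _
    _ ≤ _ := add_le_add h2 h3
    _ = _ := by ring

section dyn
variable {N : ℕ} (ω κ : Fin N → Fin N → ℝ) (e : Fin N → P2)

lemma hasDerivAt_UU (hωs : ∀ i j, ω i j = ω j i) (hκs : ∀ i j, κ i j = κ j i)
    (q : ℝ → Fin N → P2) (p : Fin N → P2) (t : ℝ) (hq : HasDerivAt q p t)
    (hd : ∀ i j, i ≠ j → q t i ≠ q t j) :
    HasDerivAt (fun t => UU ω κ e (q t)) (∑ i, inner ℝ (Frc ω κ e (q t) i) (p i)) t := by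
  rw [hasDerivAt_pi] at hq
  have h1 : ∀ i j, HasDerivAt (fun t => ω i j * ‖q t i - q t j‖ ^ 2 +
      κ i j * (‖q t i - q t j‖ - ‖e i - e j‖) ^ 2)
      (2 * ((ω i j + κ i j * (1 - ‖e i - e j‖ / ‖q t i - q t j‖)) *
        inner ℝ (q t i - q t j) (p i - p j))) t := by
    intro i j
    by_cases hij : i = j
    · subst hij
      simpa using hasDerivAt_const t (0 : ℝ)
    have hd0 := sub_ne_zero.2 (hd i j hij)
    have hr : 0 < ‖q t i - q t j‖ := norm_pos_iff.2 hd0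
    have h2 := ((hq i).sub (hq j))
    have h3 := h2.norm_sq.const_mul (ω i j)
    have h4 := (((hasDerivAt_norm_P2 _ _ t h2 hd0).sub_const (‖e i - e j‖)).pow 2).const_mul (κ i j)
    refine (h3.add h4).congr_deriv ?_
    simp only [Pi.sub_apply]
    field_simp
    ring
  have h2 := (HasDerivAt.fun_sum fun i (_ : i ∈ Finset.univ) =>
    HasDerivAt.fun_sum fun j (_ : j ∈ Finset.univ) => h1 i j).const_mul (1 / 4)
  unfold UU
  refine h2.congr_deriv ?_
  simp only [← Finset.mul_sum]
  rw [← Frc_inner ω κ e hωs hκs]; ring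

lemma hasDerivAt_Frc (r0 R0 Bw Bk : ℝ) (hr0 : 0 < r0) (hR : 0 < R0) (hmR : ∀ i j, ‖e i - e j‖ ≤ R0)
    (hκ : ∀ i j, 0 ≤ κ i j) (hBk : 0 ≤ Bk) (hκB : ∀ i j, κ i j ≤ Bk)
    (hBw : 0 ≤ Bw) (hωB : ∀ i j, |ω i j| ≤ Bw)
    (q : ℝ → Fin N → P2) (p : Fin N → P2) (t : ℝ) (hq : HasDerivAt q p t)
    (hd : ∀ i j, i ≠ j → r0 / 2 ≤ ‖q t i - q t j‖) :
    ∃ G : Fin N → P2, (∀ i, HasDerivAt (fun t => Frc ω κ e (q t) i) (G i) t) ∧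
      SS G ≤ N ^ 3 * (Bw + Bk * (1 + 4 * R0 / r0)) ^ 2 * 4 * SS p := by
  rw [hasDerivAt_pi] at hq
  have h1 : ∀ i j, ∃ g : P2, HasDerivAt (fun t =>
      (ω i j + κ i j * (1 - ‖e i - e j‖ / ‖q t i - q t j‖)) • (q t i - q t j)) g t ∧
      ‖g‖ ≤ (Bw + Bk * (1 + 4 * R0 / r0)) * ‖p i - p j‖ := by
    intro i j
    by_cases hij : i = j
    · subst hij
      exact ⟨0, by simpa using hasDerivAt_const t (0 : P2), by simp⟩
    have hd0 : q t i - q t j ≠ 0 := by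
      intro h0
      have := hd i j hij
      rw [h0, norm_zero] at this
      linarith
    have h2 := ((hq i).sub (hq j))
    have h3 := (h2.const_smul (ω i j)).add
      ((hasDerivAt_edge _ _ t ‖e i - e j‖ h2 hd0).const_smul (κ i j))
    refine ⟨_, h3.congr_of_eventuallyEq (Filter.Eventually.of_forall fun s => ?_), ?_⟩
    · simp [add_smul, smul_smul]
    · have h4 := edge_deriv_bound (q t i - q t j) (p i - p j) ‖e i - e j‖ r0 R0 (norm_nonneg _)
        (hmR i j) hr0 (hd i j hij)
      refine (norm_add_le _ _).trans ?_
      rw [norm_smul, norm_smul (κ i j), add_mul, Real.norm_eq_abs, Real.norm_eq_abs,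
        abs_of_nonneg (hκ i j), mul_assoc]
      gcongr
      · exact hωB i j
      · exact hκB i j
      · exact h4
  choose g hg1 hg2 using h1
  refine ⟨fun i => ∑ j, g i j, fun i => ?_, SS_sum_le p g _ (by positivity) hg2⟩
  unfold Frc
  exact HasDerivAt.fun_sum fun j _ => hg1 i j

lemma young (u v : Fin N → P2) (a : ℝ) (ha : 0 < a) :
    |∑ i, inner ℝ (u i) (v i)| ≤ a * SS u + (1 / (4 * a)) * SS v := by
  refine (Finset.abs_sum_le_sum_abs _ _).trans ?_
  unfold SS
  rw [Finset.mul_sum, Finset.mul_sum, ← Finset.sum_add_distrib]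
  refine Finset.sum_le_sum fun i _ => ?_
  have h1 := abs_real_inner_le_norm (u i) (v i)
  have h2 : a * ‖u i‖ ^ 2 + 1 / (4 * a) * ‖v i‖ ^ 2 - ‖u i‖ * ‖v i‖ =
    a * (‖u i‖ - 1 / (2 * a) * ‖v i‖) ^ 2 := by field_simp; ring
  have h3 : 0 ≤ a * (‖u i‖ - 1 / (2 * a) * ‖v i‖) ^ 2 := by positivity
  linarith

noncomputable def WW (ε : ℝ) (q p : Fin N → P2) : ℝ :=
  1 / 2 * SS p + UU ω κ e q + ε * ∑ i, inner ℝ (p i) (Frc ω κ e q i)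

lemma WW_bounds (ε c1 c2 c4 : ℝ) (q p h : Fin N → P2) (hc4 : 0 < c4) (hc2 : 0 < c2)
    (hε : 0 < ε) (hε1 : ε ≤ 1) (hε2 : ε * c4 ≤ c1 / 2)
    (h1 : c1 * SS h ≤ UU ω κ e q) (h2 : UU ω κ e q ≤ c2 * SS h)
    (h4 : SS (Frc ω κ e q) ≤ c4 * SS h) :
    min (1 / 4) (c1 / 2) * (SS h + SS p) ≤ WW ω κ e ε q p ∧
    WW ω κ e ε q p ≤ (1 + c2 + c4) * (SS h + SS p) := by
  have hH := SS_nonneg h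
  have hP := SS_nonneg p
  have hF := SS_nonneg (Frc ω κ e q)
  have y := young p (Frc ω κ e q) (1 / (4 * ε)) (by positivity)
  rw [show 1 / (4 * (1 / (4 * ε))) = ε by field_simp] at y
  rw [abs_le] at y
  have y1 := mul_le_mul_of_nonneg_left y.1 hε.le
  have y2 := mul_le_mul_of_nonneg_left y.2 hε.le
  have e1 : ε * (1 / (4 * ε) * SS p + ε * SS (Frc ω κ e q)) =
    1 / 4 * SS p + ε * (ε * SS (Frc ω κ e q)) := by field_simp
  have e2 : ε * (ε * SS (Frc ω κ e q)) ≤ c1 / 2 * SS h := by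
    calc _ ≤ 1 * (ε * (c4 * SS h)) := by gcongr
      _ = ε * c4 * SS h := by ring
      _ ≤ _ := by gcongr
  have e3 : ε * (ε * SS (Frc ω κ e q)) ≤ c4 * SS h := by
    calc _ ≤ 1 * (1 * (c4 * SS h)) := by gcongr
      _ = _ := by ring
  unfold WW
  constructor
  · have m1 := mul_le_mul_of_nonneg_right (min_le_left (1 / 4) (c1 / 2)) hP
    have m2 := mul_le_mul_of_nonneg_right (min_le_right (1 / 4) (c1 / 2)) hH
    linarith
  · nlinarith [mul_nonneg hc2.le hP, mul_nonneg hc4.le hP]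

lemma WW_deriv (hωs : ∀ i j, ω i j = ω j i) (hκs : ∀ i j, κ i j = κ j i)
    (ε ν K c3 : ℝ) (hε : 0 < ε) (hν : 0 < ν) (hK : ε * (ν ^ 2 + 1 + K) ≤ ν)
    (q p : ℝ → Fin N → P2) (h : Fin N → P2) (t : ℝ) (hq : HasDerivAt q (p t) t)
    (hp : HasDerivAt p (fun i => (-ν) • p t i - Frc ω κ e (q t) i) t)
    (hd : ∀ i j, i ≠ j → q t i ≠ q t j)
    (G : Fin N → P2) (hG : ∀ i, HasDerivAt (fun t => Frc ω κ e (q t) i) (G i) t)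
    (hGK : SS G ≤ K * SS (p t)) (h3 : c3 * SS h ≤ SS (Frc ω κ e (q t))) :
    ∃ w, HasDerivAt (fun t => WW ω κ e ε (q t) (p t)) w t ∧
      w ≤ - (min (ν / 2) (ε * c3 / 2) * (SS h + SS (p t))) := by
  have hU := hasDerivAt_UU ω κ e hωs hκs q (p t) t hq hd
  rw [hasDerivAt_pi] at hp
  set F := Frc ω κ e (q t) with hF
  have hP : HasDerivAt (fun t => SS (p t)) (∑ i, 2 * inner ℝ (p t i) ((-ν) • p t i - F i)) t := by
    unfold SS
    exact HasDerivAt.fun_sum fun i _ => (hp i).norm_sq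
  have hC : HasDerivAt (fun t => ∑ i, inner ℝ (p t i) (Frc ω κ e (q t) i))
      (∑ i, (inner ℝ (p t i) (G i) + inner ℝ ((-ν) • p t i - F i) (F i))) t :=
    HasDerivAt.fun_sum fun i _ => (hp i).inner ℝ (hG i)
  refine ⟨_, ((hP.const_mul (1 / 2)).add hU).add (hC.const_mul ε), ?_⟩
  have e1 : ∑ i, 2 * inner ℝ (p t i) ((-ν) • p t i - F i) =
      -2 * ν * SS (p t) - 2 * ∑ i, inner ℝ (p t i) (F i) := by
    unfold SS
    rw [Finset.mul_sum, Finset.mul_sum, ← Finset.sum_sub_distrib]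
    refine Finset.sum_congr rfl fun i _ => ?_
    rw [inner_sub_right, real_inner_smul_right, real_inner_self_eq_norm_sq]; ring
  have e2 : ∑ i, inner ℝ (F i) (p t i) = ∑ i, inner ℝ (p t i) (F i) :=
    Finset.sum_congr rfl fun i _ => real_inner_comm _ _
  have e3 : ∑ i, (inner ℝ (p t i) (G i) + inner ℝ ((-ν) • p t i - F i) (F i)) =
      ∑ i, inner ℝ (p t i) (G i) - ν * ∑ i, inner ℝ (p t i) (F i) - SS F := by
    unfold SS
    rw [Finset.mul_sum, ← Finset.sum_sub_distrib, ← Finset.sum_sub_distrib]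
    refine Finset.sum_congr rfl fun i _ => ?_
    rw [inner_sub_left, real_inner_smul_left, real_inner_self_eq_norm_sq]; ring
  rw [e1, e2, e3]
  have y1 := (abs_le.1 (young (p t) G (1 / 2) (by norm_num))).2
  have y2 := (abs_le.1 (young (p t) F (ν / 2) (by positivity))).1
  set X := ∑ i, inner ℝ (p t i) (F i)
  set Y := ∑ i, inner ℝ (p t i) (G i)
  have hPn := SS_nonneg (p t)
  have hHn := SS_nonneg h
  have hFn := SS_nonneg F
  have y3 : -ν * X ≤ ν ^ 2 / 2 * SS (p t) + 1 / 2 * SS F := by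
    have := mul_le_mul_of_nonneg_left y2 hν.le
    have e5 : ν * -(ν / 2 * SS (p t) + 1 / (4 * (ν / 2)) * SS F) =
      -(ν ^ 2 / 2 * SS (p t) + 1 / 2 * SS F) := by field_simp; ring
    linarith
  have y4 : Y - ν * X - SS F ≤ (ν ^ 2 + 1 + K) / 2 * SS (p t) - 1 / 2 * SS F := by
    linarith
  have y5 := mul_le_mul_of_nonneg_left y4 hε.le
  have y6 := mul_le_mul_of_nonneg_right hK hPn
  have y7 := mul_le_mul_of_nonneg_left h3 hε.le
  have m1 := mul_le_mul_of_nonneg_right (min_le_left (ν / 2) (ε * c3 / 2)) hPn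
  have m2 := mul_le_mul_of_nonneg_right (min_le_right (ν / 2) (ε * c3 / 2)) hHn
  linarith

end dyn

lemma gronwall_trap (f W : ℝ → ℝ) (ρ a b lam : ℝ) (ha : 0 < a) (hb : 0 < b) (hlam : 0 < lam)
    (hρ : 0 < ρ) (hf : ∀ t, 0 ≤ t → ContinuousAt f t) (hf0 : ∀ t, 0 ≤ f t)
    (hlow : ∀ t, 0 ≤ t → f t < ρ → a * f t ^ 2 ≤ W t)
    (hup : ∀ t, 0 ≤ t → f t < ρ → W t ≤ b * f t ^ 2)
    (hder : ∀ t, 0 ≤ t → f t < ρ → ∃ w, HasDerivAt W w t ∧ w ≤ -lam * W t)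
    (hδ : f 0 < ρ) (hδ' : √(b / a) * f 0 < ρ) :
    ∀ t, 0 ≤ t → f t ≤ √(b / a) * Real.exp (-(lam / 2) * t) * f 0 := by
  -- decay on an interval where `f < ρ`
  have decay : ∀ T, 0 ≤ T → (∀ t, 0 ≤ t → t ≤ T → f t < ρ) →
      f T ≤ √(b / a) * Real.exp (-(lam / 2) * T) * f 0 := by
    intro T hT hfT
    have hd : ∀ t ∈ Set.Icc 0 T, ∃ w, HasDerivAt (fun t => Real.exp (lam * t) * W t) w t ∧ w ≤ 0 := by
      intro t ht
      obtain ⟨w, hw, hw'⟩ := hder t ht.1 (hfT t ht.1 ht.2)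
      have h1 : HasDerivAt (fun t => Real.exp (lam * t)) (Real.exp (lam * t) * (lam * 1)) t :=
        ((hasDerivAt_id t).const_mul lam).exp
      refine ⟨_, h1.mul hw, ?_⟩
      have := Real.exp_pos (lam * t)
      nlinarith [mul_le_mul_of_nonneg_left hw' this.le]
    have hanti : AntitoneOn (fun t => Real.exp (lam * t) * W t) (Set.Icc 0 T) := by
      refine antitoneOn_of_deriv_nonpos (convex_Icc 0 T) ?_ ?_ ?_
      · intro t ht
        obtain ⟨w, hw, _⟩ := hd t ht
        exact hw.continuousAt.continuousWithinAt
      · intro t ht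
        obtain ⟨w, hw, _⟩ := hd t (interior_subset ht)
        exact hw.differentiableAt.differentiableWithinAt
      · intro t ht
        obtain ⟨w, hw, hw'⟩ := hd t (interior_subset ht)
        rwa [hw.deriv]
    have h1 := hanti (Set.left_mem_Icc.2 hT) (Set.right_mem_Icc.2 hT) hT
    simp only [mul_zero, Real.exp_zero, one_mul] at h1
    have h2 := hlow T hT (hfT T hT le_rfl)
    have h3 := hup 0 le_rfl (hfT 0 le_rfl hT)
    have h00 := hf0 0
    refine (abs_le_of_sq_le_sq' ?_ (by positivity)).2
    rw [mul_pow, mul_pow, Real.sq_sqrt (by positivity), ← Real.exp_nat_mul]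
    have e1 : ((2 : ℕ) : ℝ) * (-(lam / 2) * T) = -(lam * T) := by push_cast; ring
    rw [e1, Real.exp_neg]
    have hE := Real.exp_pos (lam * T)
    have h4 : Real.exp (lam * T) * (a * f T ^ 2) ≤ b * f 0 ^ 2 :=
      (mul_le_mul_of_nonneg_left h2 hE.le).trans (h1.trans h3)
    rw [show b / a * (Real.exp (lam * T))⁻¹ * f 0 ^ 2 = b * f 0 ^ 2 / (a * Real.exp (lam * T)) by
      field_simp, le_div_iff₀ (by positivity)]
    linarith
  have trap : ∀ t, 0 ≤ t → f t < ρ := by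
    by_contra hcon
    push Not at hcon
    obtain ⟨t1, ht1, hft1⟩ := hcon
    have hcont : ContinuousOn f (Set.Icc 0 t1) := fun t ht => (hf t ht.1).continuousWithinAt
    have hcl : IsClosed (Set.Icc 0 t1 ∩ f ⁻¹' Set.Ici ρ) :=
      hcont.preimage_isClosed_of_isClosed isClosed_Icc isClosed_Ici
    have hcp : IsCompact (Set.Icc 0 t1 ∩ f ⁻¹' Set.Ici ρ) :=
      isCompact_Icc.of_isClosed_subset hcl Set.inter_subset_left
    obtain ⟨T, ⟨hT1, hT2⟩, hTmin⟩ := hcp.exists_isLeast ⟨t1, ⟨ht1, le_rfl⟩, hft1⟩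
    have hT2' : ρ ≤ f T := hT2
    have hlt : ∀ t, 0 ≤ t → t < T → f t < ρ := by
      intro t h0 hlt
      by_contra hge
      exact absurd (hTmin ⟨⟨h0, hlt.le.trans hT1.2⟩, not_lt.1 hge⟩) (not_le.2 hlt)
    have hTpos : 0 < T := by
      rcases hT1.1.lt_or_eq with h | h
      · exact h
      · rw [← h] at hT2'; linarith
    have hle : ∀ t, 0 ≤ t → t < T → f t ≤ √(b / a) * f 0 := by
      intro t h0 h1
      refine (decay t h0 fun s hs hst => hlt s hs (hst.trans_lt h1)).trans ?_
      have : Real.exp (-(lam / 2) * t) ≤ 1 := by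
        rw [Real.exp_le_one_iff]; nlinarith
      have h0' := hf0 0
      calc _ ≤ √(b / a) * 1 * f 0 := by gcongr
        _ = _ := by ring
    have : f T ≤ √(b / a) * f 0 := by
      have ht : Filter.Tendsto f (nhdsWithin T (Set.Iio T)) (nhds (f T)) :=
        (hf T hTpos.le).continuousWithinAt
      refine le_of_tendsto ht ?_
      filter_upwards [Ioo_mem_nhdsLT hTpos] with t htt
      exact hle t htt.1.le htt.2
    linarith
  intro t ht
  exact decay t ht fun s hs _ => trap s hs

lemma rot_toEuclideanLin (c s : ℝ) (v : P2) :
    Matrix.toEuclideanLin !![c, -s; s, c] v = rot c s v := by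
  ext k; fin_cases k <;> simp [rot, Matrix.toEuclideanLin, Matrix.mulVec, dotProduct, Fin.sum_univ_two] <;> ring

lemma SO2_form (R : Matrix (Fin 2) (Fin 2) ℝ) (hR : R ∈ Matrix.orthogonalGroup (Fin 2) ℝ)
    (hd : R.det = 1) : ∃ c s : ℝ, c ^ 2 + s ^ 2 = 1 ∧ R = !![c, -s; s, c] := by
  rw [Matrix.mem_orthogonalGroup_iff] at hR
  have h00 := congrFun (congrFun hR 0) 0
  have h01 := congrFun (congrFun hR 0) 1
  have h11 := congrFun (congrFun hR 1) 1
  simp [Matrix.mul_apply, Fin.sum_univ_two, Matrix.star_apply] at h00 h01 h11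
  rw [Matrix.det_fin_two] at hd
  have key : (R 0 0 - R 1 1) ^ 2 + (R 0 1 + R 1 0) ^ 2 = 0 := by
    linear_combination h00 + h11 - 2 * hd
  have e1 : R 0 0 - R 1 1 = 0 := by nlinarith [sq_nonneg (R 0 0 - R 1 1), sq_nonneg (R 0 1 + R 1 0)]
  have e2 : R 0 1 + R 1 0 = 0 := by nlinarith [sq_nonneg (R 0 0 - R 1 1), sq_nonneg (R 0 1 + R 1 0)]
  refine ⟨R 0 0, R 1 0, ?_, ?_⟩
  · have : R 0 1 = - R 1 0 := by linarith
    rw [this] at h00; linarith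
  · ext i j; fin_cases i <;> fin_cases j <;> simp <;> linarith

lemma SO2_mem (c s : ℝ) (h : c ^ 2 + s ^ 2 = 1) :
    !![c, -s; s, c] ∈ Matrix.orthogonalGroup (Fin 2) ℝ ∧ (!![c, -s; s, c] : Matrix (Fin 2) (Fin 2) ℝ).det = 1 := by
  constructor
  · rw [Matrix.mem_orthogonalGroup_iff]
    ext i j; fin_cases i <;> fin_cases j <;>
      simp [Matrix.mul_apply, Fin.sum_univ_two, Matrix.star_apply] <;> linarith
  · rw [Matrix.det_fin_two]; simp; linarith

lemma rot_add (c s : ℝ) (v w : P2) : rot c s (v + w) = rot c s v + rot c s w := by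
  simp [rot, smul_add]; abel

set_option maxHeartbeats 2000000 in
/-- core statement -/
lemma core {N : ℕ} (hN : 0 < N) (ω κ : Fin N → Fin N → ℝ) (e : Fin N → P2)
    (he0 : ∑ i, e i = 0) (hdist : ∀ i j, i ≠ j → e i ≠ e j)
    (hωs : ∀ i j, ω i j = ω j i) (hκs : ∀ i j, κ i j = κ j i) (hκ : ∀ i j, 0 ≤ κ i j)
    (hbal : ∀ i, ∑ j, ω i j • (e i - e j) = 0)
    (hpos : ∀ τ : ℝ, 0 < τ → ∀ h : Fin N → P2, ∑ i, h i = 0 →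
      ∑ i, inner ℝ (h i) (JJ (e i)) = 0 → BB ω (fun i j => τ * κ i j) e h ≤ 0 → h = 0)
    (ν : ℝ) (hν : 0 < ν) (E : Set ((Fin N → P2) × (Fin N → P2)))
    (hE : ∀ z, z ∈ E ↔ ∃ c s : ℝ, ∃ t : P2, c ^ 2 + s ^ 2 = 1 ∧ z = (fun i => rot c s (e i) + t, 0)) :
    ∃ δ C lam : ℝ, 0 < δ ∧ 0 < C ∧ 0 < lam ∧
      ∀ q p : ℝ → (Fin N → P2),
        (∀ t : ℝ, 0 ≤ t → HasDerivAt q (p t) t) →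
        (∀ t : ℝ, 0 ≤ t → HasDerivAt p (fun i => (-ν) • p t i - Frc ω κ e (q t) i) t) →
        Metric.infDist (q 0, p 0) E < δ →
        ∀ t : ℝ, 0 ≤ t →
          Metric.infDist (q t, p t) E ≤
            C * Real.exp (-lam * t) * Metric.infDist (q 0, p 0) E := by
  have hNR : (0 : ℝ) < N := by exact_mod_cast hN
  -- constants
  obtain ⟨R0, hR0, hR⟩ : ∃ R0 : ℝ, 0 < R0 ∧ ∀ i j, ‖e i - e j‖ ≤ R0 := by
    have : ∀ᶠ R : ℝ in Filter.atTop, 0 < R ∧ ∀ i j, ‖e i - e j‖ ≤ R := by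
      refine (Filter.eventually_gt_atTop 0).and ?_
      simp only [Filter.eventually_all]
      exact fun i j => Filter.eventually_ge_atTop _
    exact this.exists
  obtain ⟨Bw, hBw, hωB⟩ : ∃ B : ℝ, 0 < B ∧ ∀ i j, |ω i j| ≤ B := by
    have : ∀ᶠ R : ℝ in Filter.atTop, 0 < R ∧ ∀ i j, |ω i j| ≤ R := by
      refine (Filter.eventually_gt_atTop 0).and ?_
      simp only [Filter.eventually_all]
      exact fun i j => Filter.eventually_ge_atTop _
    exact this.exists
  obtain ⟨Bk, hBk, hκB⟩ : ∃ B : ℝ, 0 < B ∧ ∀ i j, κ i j ≤ B := by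
    have : ∀ᶠ R : ℝ in Filter.atTop, 0 < R ∧ ∀ i j, κ i j ≤ R := by
      refine (Filter.eventually_gt_atTop 0).and ?_
      simp only [Filter.eventually_all]
      exact fun i j => Filter.eventually_ge_atTop _
    exact this.exists
  obtain ⟨r0, hr0, hr⟩ : ∃ r0 : ℝ, 0 < r0 ∧ ∀ i j, i ≠ j → r0 ≤ ‖e i - e j‖ := by
    have : ∀ᶠ r : ℝ in nhdsWithin 0 (Set.Ioi 0), 0 < r ∧ ∀ i j, i ≠ j → r ≤ ‖e i - e j‖ := by
      refine (eventually_mem_nhdsWithin).and ?_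
      simp only [Filter.eventually_all]
      exact fun i j hij => (eventually_le_nhds
        (norm_pos_iff.2 (sub_ne_zero.2 (hdist i j hij)))).filter_mono nhdsWithin_le_nhds
    exact this.exists
  obtain ⟨c, hc, hcoer⟩ := coercive ω (fun i j => 2 / (9 * R0 ^ 2) * κ i j) e
    (hpos (2 / (9 * R0 ^ 2)) (by positivity))
  obtain ⟨η, hη0, hηR, hηr, hη1, hη2⟩ : ∃ η : ℝ, 0 < η ∧ η ≤ R0 ∧ η ≤ r0 / 2 ∧
      η ^ 2 / (9 * R0 ^ 2) * (Bk * N ^ 2 * 4) ≤ c / 2 ∧ η / r0 * (Bk * N ^ 2 * 4) ≤ c / 8 := by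
    have : ∀ᶠ η : ℝ in nhdsWithin 0 (Set.Ioi 0), 0 < η ∧ η ≤ R0 ∧ η ≤ r0 / 2 ∧
      η ^ 2 / (9 * R0 ^ 2) * (Bk * N ^ 2 * 4) ≤ c / 2 ∧ η / r0 * (Bk * N ^ 2 * 4) ≤ c / 8 := by
      refine (eventually_mem_nhdsWithin).and (Filter.Eventually.filter_mono nhdsWithin_le_nhds ?_)
      refine (eventually_le_nhds hR0).and ((eventually_le_nhds (half_pos hr0)).and (.and ?_ ?_))
      · have : Filter.Tendsto (fun η : ℝ => η ^ 2 / (9 * R0 ^ 2) * (Bk * N ^ 2 * 4)) (nhds 0)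
            (nhds (0 ^ 2 / (9 * R0 ^ 2) * (Bk * N ^ 2 * 4))) :=
          Continuous.tendsto (by fun_prop) 0
        exact this.eventually_le_const (by simpa using hc)
      · have : Filter.Tendsto (fun η : ℝ => η / r0 * (Bk * N ^ 2 * 4)) (nhds 0)
            (nhds (0 / r0 * (Bk * N ^ 2 * 4))) :=
          Continuous.tendsto (by fun_prop) 0
        exact this.eventually_le_const (by simpa using hc)
    exact this.exists
  -- Lyapunov constants
  set c1 := c / 8 with hc1
  set c2 := (Bw + Bk) * (N : ℝ) ^ 2 with hc2
  set c3 := c1 ^ 2 with hc3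
  set c4 := (N : ℝ) ^ 3 * (Bw + Bk) ^ 2 * 4 with hc4
  set K := (N : ℝ) ^ 3 * (Bw + Bk * (1 + 4 * R0 / r0)) ^ 2 * 4 with hK
  have hc1p : 0 < c1 := by positivity
  have hc2p : 0 < c2 := by positivity
  have hc3p : 0 < c3 := by positivity
  have hc4p : 0 < c4 := by positivity
  have hKp : 0 < K := by positivity
  obtain ⟨ε, hε, hε1, hε2, hε3⟩ : ∃ ε : ℝ, 0 < ε ∧ ε ≤ 1 ∧ ε * c4 ≤ c1 / 2 ∧
      ε * (ν ^ 2 + 1 + K) ≤ ν := by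
    refine ⟨min 1 (min (c1 / 2 / c4) (ν / (ν ^ 2 + 1 + K))), by positivity, min_le_left _ _, ?_, ?_⟩
    · rw [← le_div_iff₀ hc4p]
      exact (min_le_right _ _).trans (min_le_left _ _)
    · rw [← le_div_iff₀ (by positivity)]
      exact (min_le_right _ _).trans (min_le_right _ _)
  set a := min (1 / 4) (c1 / 2) with ha
  set b := (1 + c2 + c4) with hb
  set g := min (ν / 2) (ε * c3 / 2) with hg
  have hap : 0 < a := by positivity
  have hbp : 0 < b := by positivity
  have hgp : 0 < g := by positivity
  set ρ := η / (8 * N + 1) with hρ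
  have hρp : 0 < ρ := by positivity
  have hEne : E.Nonempty := ⟨(fun i => rot 1 0 (e i) + 0, 0), (hE _).2 ⟨1, 0, 0, by norm_num, rfl⟩⟩
  -- geometric pointwise data
  have geo : ∀ q p : Fin N → P2, ∃ m h : Fin N → P2, q = m + h ∧
      (∀ i j, ‖m i - m j‖ = ‖e i - e j‖) ∧ (∀ i, ∑ j, ω i j • (m i - m j) = 0) ∧
      c * SS h ≤ BB ω (fun i j => 2 / (9 * R0 ^ 2) * κ i j) m h ∧
      Metric.infDist (q, p) E ^ 2 ≤ SS h + SS p ∧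
      SS h + SS p ≤ 2 * N * Metric.infDist (q, p) E ^ 2 := by
    intro q p
    obtain ⟨u, s, t, hus, o1, o2, omin⟩ := procrustes hN e he0 q
    set m : Fin N → P2 := fun i => rot u s (e i) + t with hm
    have hmm : ∀ i j, m i - m j = rot u s (e i - e j) := by
      intro i j; rw [rot_sub]; simp [hm]
    refine ⟨m, q - m, by simp, ?_, ?_, ?_, ?_, ?_⟩
    · intro i j; rw [hmm, norm_rot _ _ hus]
    · intro i
      have : ∑ j, ω i j • (m i - m j) = rot u s (∑ j, ω i j • (e i - e j)) := by
        rw [rot_sum]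
        refine Finset.sum_congr rfl fun j _ => ?_
        rw [hmm]
        simp only [rot, smul_add, map_smul, smul_smul, mul_comm]
      rw [this, hbal]; simp [rot]
    · exact coercive_rot ω _ e c hcoer u s hus t m (q - m) (fun i => rfl) o1 o2
    · have hmem : ((m, 0) : (Fin N → P2) × (Fin N → P2)) ∈ E := (hE _).2 ⟨u, s, t, hus, rfl⟩
      have h1 := Metric.infDist_le_dist_of_mem (x := (q, p)) hmem
      have h2 : dist (q, p) ((m, 0) : (Fin N → P2) × (Fin N → P2)) ^ 2 ≤ SS (q - m) + SS p := by
        rw [Prod.dist_eq, dist_eq_norm, dist_zero_right]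
        have n1 := norm_sq_le_SS (q - m)
        have n2 := norm_sq_le_SS p
        have := SS_nonneg (q - m)
        have := SS_nonneg p
        rcases max_choice ‖q - m‖ ‖p‖ with hh | hh <;> simp only [hh] <;> linarith
      exact (pow_le_pow_left₀ Metric.infDist_nonneg h1 2).trans h2
    · have h3 : √((SS (q - m) + SS p) / (2 * N)) ≤ Metric.infDist (q, p) E := by
        rw [Metric.le_infDist hEne]
        intro z hz
        obtain ⟨u', s', t', hus', rfl⟩ := (hE z).1 hz
        refine Real.sqrt_le_iff.2 ⟨dist_nonneg, ?_⟩
        rw [div_le_iff₀ (by positivity)]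
        have n1 := (omin u' s' t' hus').trans (SS_le_norm_sq (q - fun i => rot u' s' (e i) + t'))
        have n2 := SS_le_norm_sq p
        set m' : Fin N → P2 := fun i => rot u' s' (e i) + t'
        have d1 : ‖q - m'‖ ≤ dist (q, p) ((m', 0) : (Fin N → P2) × (Fin N → P2)) := by
          rw [Prod.dist_eq, dist_eq_norm]; exact le_max_left _ _
        have d2 : ‖p‖ ≤ dist (q, p) ((m', 0) : (Fin N → P2) × (Fin N → P2)) := by
          rw [Prod.dist_eq, dist_zero_right p]; exact le_max_right _ _
        set D := dist (q, p) ((m', 0) : (Fin N → P2) × (Fin N → P2))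
        have d3 : (N : ℝ) * ‖q - m'‖ ^ 2 ≤ N * D ^ 2 := by gcongr
        have d4 : (N : ℝ) * ‖p‖ ^ 2 ≤ N * D ^ 2 := by gcongr
        have n1' : SS (q - m) ≤ N * ‖q - m'‖ ^ 2 := n1
        linarith
      have h4 := Real.sqrt_le_iff.1 h3
      have h5 := h4.2
      rw [div_le_iff₀ (by positivity)] at h5
      linarith
  -- analytic pointwise data
  have ana : ∀ q p : Fin N → P2, Metric.infDist (q, p) E < ρ → ∃ h : Fin N → P2,
      Metric.infDist (q, p) E ^ 2 ≤ SS h + SS p ∧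
      SS h + SS p ≤ 2 * N * Metric.infDist (q, p) E ^ 2 ∧
      (∀ i j, i ≠ j → r0 / 2 ≤ ‖q i - q j‖) ∧
      c1 * SS h ≤ UU ω κ e q ∧ UU ω κ e q ≤ c2 * SS h ∧
      c3 * SS h ≤ SS (Frc ω κ e q) ∧ SS (Frc ω κ e q) ≤ c4 * SS h := by
    intro q p hqp
    obtain ⟨m, h, rfl, hme, hmω, hco, hd1, hd2⟩ := geo q p
    set D := Metric.infDist (m + h, p) E with hD
    have hD0 : 0 ≤ D := Metric.infDist_nonneg
    have hη : ∀ i j, ‖h i - h j‖ ≤ η := by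
      intro i j
      refine (abs_le_of_sq_le_sq' ?_ hη0.le).2
      have t1 := diff_sq_le_SS h i j
      have t2 := SS_nonneg p
      have t3 : D ^ 2 ≤ ρ ^ 2 := by gcongr
      have t4 : η = ρ * (8 * N + 1) := by rw [hρ]; field_simp
      have t5 : 8 * N * D ^ 2 ≤ 8 * N * ρ ^ 2 := by gcongr
      have t6 : 8 * N * ρ ^ 2 ≤ η ^ 2 := by
        rw [t4, mul_pow]
        nlinarith [sq_nonneg ρ, mul_nonneg (sq_nonneg ρ) hNR.le,
          mul_nonneg (sq_nonneg ρ) (sq_nonneg (N : ℝ))]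
      linarith
    have hdd : ∀ i j, i ≠ j → r0 / 2 ≤ ‖(m + h) i - (m + h) j‖ := by
      intro i j hij
      have t1 := hr i j hij
      rw [← hme] at t1
      have t2 := hη i j
      have t3 : ‖m i - m j‖ ≤ ‖(m + h) i - (m + h) j‖ + ‖h i - h j‖ := by
        have := norm_sub_le ((m + h) i - (m + h) j) (h i - h j)
        rwa [show (m + h) i - (m + h) j - (h i - h j) = m i - m j by simp; abel] at this
      linarith
    have hne : ∀ i j, i ≠ j → (m + h) i ≠ (m + h) j := by
      intro i j hij h0
      have := hdd i j hij
      rw [h0, sub_self, norm_zero] at this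
      linarith
    have l1 := UU_lower ω κ e m h hωs hmω hme R0 η c Bk hR0 hR hη hηR hκ hBk.le hκB hco hη1
    exact ⟨h, hd1, hd2, hdd, l1, UU_upper ω κ e m h hωs hmω hme Bw Bk hκ hBk.le hκB hBw.le hωB,
      Frc_lower ω κ e m h hωs hκs hmω hme r0 η c1 Bk hr0 hdd hη hη0.le hκ hBk.le hκB hc1p l1 hη2,
      Frc_upper ω κ e m h hmω hme hne Bw Bk hκ hBk.le hκB hBw.le hωB⟩
  refine ⟨min ρ (ρ / √(b * (2 * N) / a)), √(b * (2 * N) / a), g / b / 2, by positivity,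
    by positivity, by positivity, ?_⟩
  intro q p hq hp h0
  have hfin := gronwall_trap (fun t => Metric.infDist (q t, p t) E)
    (fun t => WW ω κ e ε (q t) (p t)) ρ a (b * (2 * N)) (g / b) hap (by positivity) (by positivity)
    hρp ?_ (fun t => Metric.infDist_nonneg) ?_ ?_ ?_ (lt_of_lt_of_le h0 (min_le_left _ _)) ?_
  · exact hfin
  · intro t ht
    have : ContinuousAt (fun t => (q t, p t)) t := (hq t ht).continuousAt.prodMk (hp t ht).continuousAt
    exact (Metric.continuous_infDist_pt E).continuousAt.comp this
  · intro t ht hft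
    obtain ⟨h, x1, x2, x3, x4, x5, x6, x7⟩ := ana _ _ hft
    have := (WW_bounds ω κ e ε c1 c2 c4 (q t) (p t) h hc4p hc2p hε hε1 hε2 x4 x5 x7).1
    exact (mul_le_mul_of_nonneg_left x1 hap.le).trans this
  · intro t ht hft
    obtain ⟨h, x1, x2, x3, x4, x5, x6, x7⟩ := ana _ _ hft
    have := (WW_bounds ω κ e ε c1 c2 c4 (q t) (p t) h hc4p hc2p hε hε1 hε2 x4 x5 x7).2
    rw [mul_assoc]
    exact this.trans (mul_le_mul_of_nonneg_left x2 hbp.le)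
  · intro t ht hft
    obtain ⟨h, x1, x2, x3, x4, x5, x6, x7⟩ := ana _ _ hft
    have hW := (WW_bounds ω κ e ε c1 c2 c4 (q t) (p t) h hc4p hc2p hε hε1 hε2 x4 x5 x7).2
    obtain ⟨G, hG, hGK⟩ := hasDerivAt_Frc ω κ e r0 R0 Bw Bk hr0 hR0 hR hκ hBk.le hκB hBw.le hωB
      q (p t) t (hq t ht) x3
    have hne : ∀ i j, i ≠ j → q t i ≠ q t j := by
      intro i j hij h0
      have := x3 i j hij
      rw [h0, sub_self, norm_zero] at this
      linarith
    obtain ⟨w, hw, hw'⟩ := WW_deriv ω κ e hωs hκs ε ν K c3 hε hν hε3 q p h t (hq t ht) (hp t ht) hne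
      G hG hGK x6
    refine ⟨w, hw, hw'.trans ?_⟩
    have : g / b * WW ω κ e ε (q t) (p t) ≤ g * (SS h + SS (p t)) := by
      calc _ ≤ g / b * (b * (SS h + SS (p t))) := by gcongr
        _ = _ := by field_simp
    linarith
  · have := lt_of_lt_of_le h0 (min_le_right _ _)
    rw [lt_div_iff₀ (by positivity)] at this
    linarith

/-- Theorem 2: under the stated hypotheses, the set `E` of rigid motions of
the desired placement (with zero momenta) is a locally exponentially stable set of
equilibria of the damped gradient system
`q̇_i = p_i, ṗ_i = −ν p_i − ∑_{j≠i} α_ij ω_ij (1 − l_ij/r_ij)(q_i − q_j)`. -/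
theorem shape_equilibrium_locally_exponentially_stable
    {N : ℕ} (hN : 4 ≤ N)
    (qe : Fin N → EuclideanSpace ℝ (Fin 2))
    (hdist : ∀ i j, i ≠ j → qe i ≠ qe j)
    (hli : LinearIndependent ℝ
      ![fun i => qe i 0, fun i => qe i 1, (1 : Fin N → ℝ)])
    (ω : Fin N → Fin N → ℝ)
    (hωs : ∀ i j, ω i j = ω j i) (hωd : ∀ i, ω i i = 0)
    (hΩ : (stressMatrix ω).PosSemidef)
    (hker : ∀ u : Fin N → ℝ, (stressMatrix ω) *ᵥ u = 0 ↔
        u ∈ Submodule.span ℝ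
          ({fun i => qe i 0, fun i => qe i 1, (1 : Fin N → ℝ)} : Set (Fin N → ℝ)))
    (α l : Fin N → Fin N → ℝ)
    (hα : ∀ i j, i ≠ j → ω i j ≠ 0 → α i j = π / Real.arctan (ω i j))
    (hl : ∀ i j, i ≠ j → ω i j ≠ 0 →
      l i j = ‖qe i - qe j‖ * (1 - Real.arctan (ω i j) / π))
    (hspan : ∀ A : Matrix (Fin 2) (Fin 2) ℝ, A.IsSymm →
      A ∈ Submodule.span ℝ
          {M : Matrix (Fin 2) (Fin 2) ℝ | ∃ i j : Fin N, ω i j ≠ 0 ∧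
            M = Matrix.vecMulVec (fun k => qe i k - qe j k) (fun k => qe i k - qe j k)})
    (ν : ℝ) (hν : 0 < ν)
    (E : Set ((Fin N → EuclideanSpace ℝ (Fin 2)) × (Fin N → EuclideanSpace ℝ (Fin 2))))
    (hE : E = {z | ∃ (R : Matrix (Fin 2) (Fin 2) ℝ) (t0 : EuclideanSpace ℝ (Fin 2)),
        R ∈ Matrix.orthogonalGroup (Fin 2) ℝ ∧ R.det = 1 ∧
        z = (fun i => Matrix.toEuclideanLin R (qe i) + t0, 0)}) :
    ∃ δ C lam : ℝ, 0 < δ ∧ 0 < C ∧ 0 < lam ∧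
      ∀ q p : ℝ → (Fin N → EuclideanSpace ℝ (Fin 2)),
        (∀ t : ℝ, 0 ≤ t → HasDerivAt q (p t) t) →
        (∀ t : ℝ, 0 ≤ t → HasDerivAt p
          (fun i => (-ν) • p t i - ∑ j ∈ Finset.univ.erase i,
            (α i j * ω i j * (1 - l i j / ‖q t i - q t j‖)) • (q t i - q t j)) t) →
        Metric.infDist (q 0, p 0) E < δ →
        ∀ t : ℝ, 0 ≤ t →
          Metric.infDist (q t, p t) E ≤
            C * Real.exp (-lam * t) * Metric.infDist (q 0, p 0) E := by
  have hN0 : 0 < N := by omega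
  have hNR : (0 : ℝ) < N := by exact_mod_cast hN0
  have hne_of : ∀ i j, ω i j ≠ 0 → i ≠ j := by
    rintro i j h rfl; exact h (hωd i)
  set b0 : P2 := (N : ℝ)⁻¹ • ∑ i, qe i with hb0
  set e : Fin N → P2 := fun i => qe i - b0 with he
  have hee : ∀ i j, e i - e j = qe i - qe j := by intro i j; simp [he]
  set κ : Fin N → Fin N → ℝ := fun i j => α i j * ω i j - ω i j with hκdef
  have hκ' : ∀ i j, ω i j ≠ 0 → 0 < κ i j := by
    intro i j h
    simp only [hκdef]
    rw [hα i j (hne_of i j h) h]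
    have hpi := Real.pi_pos
    have hlt := Real.arctan_lt_pi_div_two (ω i j)
    rcases lt_or_gt_of_ne h with h1 | h1
    · have h2 : Real.arctan (ω i j) < 0 := by
        rw [← Real.arctan_zero]; exact Real.arctan_strictMono h1
      have : 0 < π / Real.arctan (ω i j) * ω i j :=
        mul_pos_of_neg_of_neg (div_neg_of_pos_of_neg hpi h2) h1
      linarith
    · have h2 : 0 < Real.arctan (ω i j) := by
        rw [← Real.arctan_zero]; exact Real.arctan_strictMono h1
      have : 1 < π / Real.arctan (ω i j) := by rw [lt_div_iff₀ h2]; linarith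
      nlinarith
  have hκ0 : ∀ i j, 0 ≤ κ i j := by
    intro i j
    by_cases h : ω i j = 0
    · simp [hκdef, h]
    · exact (hκ' i j h).le
  have hκs : ∀ i j, κ i j = κ j i := by
    intro i j
    by_cases h : ω i j = 0
    · have h' : ω j i = 0 := by rw [hωs]; exact h
      simp [hκdef, h, h']
    · have h' : ω j i ≠ 0 := by rw [hωs]; exact h
      simp only [hκdef]
      rw [hα i j (hne_of i j h) h, hα j i (hne_of j i h') h', hωs i j]
  have hcoef : ∀ i j (r : ℝ), α i j * ω i j * (1 - l i j / r) =
      ω i j + κ i j * (1 - ‖e i - e j‖ / r) := by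
    intro i j r
    by_cases h : ω i j = 0
    · simp [hκdef, h]
    · have ha : Real.arctan (ω i j) ≠ 0 := by rwa [Ne, Real.arctan_eq_zero_iff]
      have hpi := Real.pi_ne_zero
      simp only [hκdef, hee]
      have hk : α i j * ω i j * l i j = ‖qe i - qe j‖ * (α i j * ω i j - ω i j) := by
        rw [hl i j (hne_of i j h) h, hα i j (hne_of i j h) h]
        field_simp
      linear_combination (-1 / r) * hk
  have hbal : ∀ i, ∑ j, ω i j • (e i - e j) = 0 := by
    intro i
    have k0 := congrFun ((hker (fun i => qe i 0)).2 (Submodule.subset_span (by simp))) i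
    have k1 := congrFun ((hker (fun i => qe i 1)).2 (Submodule.subset_span (by simp))) i
    rw [mulVec_stress] at k0 k1
    ext k
    fin_cases k
    · simpa [hee] using k0
    · simpa [hee] using k1
  obtain ⟨δ, C, lam, h1, h2, h3, H⟩ := core hN0 ω κ e
    (by
      simp only [he, Finset.sum_sub_distrib, hb0]
      simp [← Nat.cast_smul_eq_nsmul ℝ, smul_smul, hNR.ne'])
    (fun i j hij h => hdist i j hij (by simpa [he] using h))
    hωs hκs hκ0 hbal
    (fun τ hτ h a1 a2 a3 => kernel_trivial qe e b0 (fun i => rfl) ω (fun i j => τ * κ i j) hωs hΩ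
      (fun u hu => (hker u).1 hu) hspan (fun i j => mul_nonneg hτ.le (hκ0 i j))
      (fun i j hij => mul_pos hτ (hκ' i j hij)) h a1 a2 a3)
    ν hν E (by
      intro z
      rw [hE]
      constructor
      · rintro ⟨R, t0, hR, hd, rfl⟩
        obtain ⟨c, s, hcs, rfl⟩ := SO2_form R hR hd
        refine ⟨c, s, rot c s b0 + t0, hcs, ?_⟩
        simp only [rot_toEuclideanLin, he, rot_sub]
        congr 1
        ext1 i
        abel
      · rintro ⟨c, s, t, hcs, rfl⟩
        refine ⟨!![c, -s; s, c], t - rot c s b0, (SO2_mem c s hcs).1, (SO2_mem c s hcs).2, ?_⟩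
        simp only [rot_toEuclideanLin, he, rot_sub]
        congr 1
        ext1 i
        abel)
  refine ⟨δ, C, lam, h1, h2, h3, fun q p hq hp => H q p hq fun t ht => ?_⟩
  refine (hp t ht).congr_deriv ?_
  ext1 i
  congr 1
  unfold Frc
  rw [← Finset.add_sum_erase _ _ (Finset.mem_univ i)]
  simp only [sub_self, smul_zero, zero_add]
  exact Finset.sum_congr rfl fun j _ => by rw [hcoef]
end

section
/- (Lemma 3) Let a, a', b, b' be four points in ℝ² no three of which are collinear. If the closed segment from a to a' and the closed segment from b to b' intersect, then ‖a − b'‖ + ‖b − a'‖ < ‖a − a'‖ + ‖b − b'‖. In words: if the pairing (a ↦ a', b ↦ b') produces crossing straight-line trajectories, then the swapped pairing (a ↦ b', b ↦ a') has strictly smaller total travelled distance, so a pairing with crossing trajectories does not minimize the total distance travelled. -/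
/-- Lemma 3: for four points `a, a', b, b'` in the plane, no three of which
are collinear, if the closed segments `[a, a']` and `[b, b']` intersect, then
`‖a − b'‖ + ‖b − a'‖ < ‖a − a'‖ + ‖b − b'‖`: the swapped pairing has strictly smaller
total travelled distance, so a pairing with crossing trajectories is not minimizing. -/
theorem crossing_pairing_not_minimal
    (a a' b b' : EuclideanSpace ℝ (Fin 2))
    (h1 : ¬ Collinear ℝ ({a, a', b} : Set (EuclideanSpace ℝ (Fin 2))))
    (h2 : ¬ Collinear ℝ ({a, a', b'} : Set (EuclideanSpace ℝ (Fin 2))))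
    (h3 : ¬ Collinear ℝ ({a, b, b'} : Set (EuclideanSpace ℝ (Fin 2))))
    (h4 : ¬ Collinear ℝ ({a', b, b'} : Set (EuclideanSpace ℝ (Fin 2))))
    (hcross : (segment ℝ a a' ∩ segment ℝ b b').Nonempty) :
    ‖a - b'‖ + ‖b - a'‖ < ‖a - a'‖ + ‖b - b'‖ := by
  obtain ⟨p, hp1, hp2⟩ := hcross
  have e1 := dist_add_dist_of_mem_segment hp1
  have e2 := dist_add_dist_of_mem_segment hp2
  have w1 := mem_segment_iff_wbtw.1 hp1
  have w2 := mem_segment_iff_wbtw.1 hp2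
  have hne : a ≠ p := by
    rintro rfl
    apply h3
    have := w2.collinear
    rwa [Set.insert_comm] at this
  have hs : dist a b' < dist a p + dist p b' := by
    refine lt_of_le_of_ne (dist_triangle _ _ _) fun h => h2 ?_
    have w3 : Wbtw ℝ a p b' := dist_add_dist_eq_iff.1 h.symm
    have := collinear_insert_insert_of_mem_affineSpan_pair
      (w1.right_mem_affineSpan_of_left_ne hne) (w3.right_mem_affineSpan_of_left_ne hne)
    refine this.subset ?_
    intro x hx
    simp only [Set.mem_insert_iff, Set.mem_singleton_iff] at hx ⊢
    tauto
  have ht := dist_triangle b p a'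
  simp only [← dist_eq_norm]
  linarith
end

section
/- Let N ≥ 2, let ω_ij = ω_ji, α_ij = α_ji, l_ij = l_ji ∈ ℝ (with ω_ii = 0), and let Ṽ(q) = (1/2) Σ_{i<j} α_ij ω_ij (r_ij − l_ij)² where r_ij = ‖q_i − q_j‖. Then Ṽ is twice continuously differentiable at every placement q = (x, y) with pairwise distinct node positions, and its Hessian at q, viewed as a 2N×2N matrix in the coordinates (x, y), equals [[Ω̃(q) + L_c^x, L_c^{xy}],[L_c^{xy}, Ω̃(q) + L_c^y]], where Ω̃(q) is the stress matrix of the effective stresses ω̃_ij(q) = α_ij ω_ij (1 − l_ij/r_ij) and the matrices L_c^x, L_c^y, L_c^{xy} are built from the coefficients c_ij = α_ij ω_ij l_ij / r_ij³ evaluated at q. -/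
open Finset Matrix

lemma aux_first {E : Type*} [NormedAddCommGroup E] [NormedSpace ℝ E] (u v : E →L[ℝ] ℝ) (l : ℝ)
    (z : E) (hz : u z ^ 2 + v z ^ 2 ≠ 0) :
    HasFDerivAt (fun z => (Real.sqrt (u z ^ 2 + v z ^ 2) - l) ^ 2)
      ((2 * (1 - l / Real.sqrt (u z ^ 2 + v z ^ 2))) • (u z • u + v z • v)) z := by
  have h1 : HasFDerivAt (fun z => u z) u z := u.hasFDerivAt
  have h2 : HasFDerivAt (fun z => v z) v z := v.hasFDerivAt
  have h := ((((h1.pow 2).add (h2.pow 2)).sqrt hz).sub_const l).pow 2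
  refine h.congr_fderiv ?_
  have hR : Real.sqrt (u z ^ 2 + v z ^ 2) ≠ 0 := by
    rw [Real.sqrt_ne_zero (by positivity)]; exact hz
  ext w
  simp
  field_simp

lemma aux_second {E : Type*} [NormedAddCommGroup E] [NormedSpace ℝ E] (u v : E →L[ℝ] ℝ) (l : ℝ)
    (z w : E) (hz : u z ^ 2 + v z ^ 2 ≠ 0) :
    HasFDerivAt (fun z => (1 - l / Real.sqrt (u z ^ 2 + v z ^ 2)) * (u z * u w + v z * v w))
      ((1 - l / Real.sqrt (u z ^ 2 + v z ^ 2)) • (u w • u + v w • v) +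
        (l / Real.sqrt (u z ^ 2 + v z ^ 2) ^ 3 * (u z * u w + v z * v w)) •
          (u z • u + v z • v)) z := by
  have hR : Real.sqrt (u z ^ 2 + v z ^ 2) ≠ 0 := by
    rw [Real.sqrt_ne_zero (by positivity)]; exact hz
  have h1 : HasFDerivAt (fun z => u z) u z := u.hasFDerivAt
  have h2 : HasFDerivAt (fun z => v z) v z := v.hasFDerivAt
  have h3 := ((h1.pow 2).add (h2.pow 2)).sqrt hz
  have h4 := (hasDerivAt_inv hR).comp_hasFDerivAt z h3
  have h := ((h4.const_mul l).const_sub 1).mul ((h1.mul_const (u w)).add (h2.mul_const (v w)))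
  have h' := h.congr_fderiv (f' := _) (g' := ((1 - l / Real.sqrt (u z ^ 2 + v z ^ 2)) • (u w • u + v w • v) +
        (l / Real.sqrt (u z ^ 2 + v z ^ 2) ^ 3 * (u z * u w + v z * v w)) •
          (u z • u + v z • v))) (by
    ext t
    simp
    field_simp
    ring)
  refine h'.congr_of_eventuallyEq (Filter.Eventually.of_forall fun t => ?_)
  simp [div_eq_mul_inv]

lemma aux_sum {N : ℕ} (g : Fin N → Fin N → ℝ) (hg : ∀ i j, g i j = g j i) (p q : Fin N) :
    ∑ i, ∑ j, (if i < j then g i j * (((Pi.single p 1 : Fin N → ℝ) i - (Pi.single p 1 : Fin N → ℝ) j) *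
      ((Pi.single q 1 : Fin N → ℝ) i - (Pi.single q 1 : Fin N → ℝ) j)) else 0)
      = stressMatrix g p q := by
  set F : Fin N → Fin N → ℝ := fun i j =>
    g i j * (((Pi.single p 1 : Fin N → ℝ) i - (Pi.single p 1 : Fin N → ℝ) j) *
      ((Pi.single q 1 : Fin N → ℝ) i - (Pi.single q 1 : Fin N → ℝ) j)) with hF
  have hs : ∀ i j, F i j = F j i := fun i j => by simp only [hF]; rw [hg i j]; ring
  have h0 : ∀ i, F i i = 0 := fun i => by simp [hF]
  have h1 : ∑ i, ∑ j, F i j = 2 * ∑ i, ∑ j, (if i < j then F i j else 0) := by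
    have e : ∑ i, ∑ j, F i j = ∑ i, ∑ j, (if i < j then F i j else 0)
        + ∑ i, ∑ j, (if j < i then F i j else 0) := by
      rw [← Finset.sum_add_distrib]
      refine Finset.sum_congr rfl fun i _ => ?_
      rw [← Finset.sum_add_distrib]
      refine Finset.sum_congr rfl fun j _ => ?_
      rcases lt_trichotomy i j with h | h | h
      · simp [h, h.not_gt]
      · subst h; simp [h0]
      · simp [h, h.not_gt]
    rw [e, two_mul]
    congr 1
    rw [Finset.sum_comm]
    refine Finset.sum_congr rfl fun i _ => Finset.sum_congr rfl fun j _ => ?_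
    rw [hs]
  have h2 : ∑ i, ∑ j, F i j = 2 * stressMatrix g p q := by
    have e : ∀ i j, F i j = (if i = p then (if i = q then g i j else 0) else 0)
       - (if i = p then (if j = q then g i j else 0) else 0)
       - (if i = q then (if j = p then g i j else 0) else 0)
       + (if j = p then (if j = q then g i j else 0) else 0) := by
      intro i j
      simp only [hF, Pi.single_apply]
      split_ifs <;> ring
    simp only [e, Finset.sum_add_distrib, Finset.sum_sub_distrib]
    rw [Finset.sum_comm (f := fun i j => if j = p then (if j = q then g i j else 0) else 0)]
    have e2 : ∑ i, ∑ j, (if i = p then (if j = q then g i j else 0) else 0) = g p q := by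
      simp [Finset.sum_ite_irrel]
    have e3 : ∑ i, ∑ j, (if i = q then (if j = p then g i j else 0) else 0) = g q p := by
      simp [Finset.sum_ite_irrel]
    have e1 : ∑ i, ∑ j, (if i = p then (if i = q then g i j else 0) else 0)
        = if p = q then ∑ j, g p j else 0 := by
      simp [Finset.sum_ite_irrel]
    have e4 : ∑ j, ∑ i, (if j = p then (if j = q then g i j else 0) else 0)
        = if p = q then ∑ j, g p j else 0 := by
      rw [← e1]
      refine Finset.sum_congr rfl fun i _ => Finset.sum_congr rfl fun j _ => ?_
      rw [hg]
    rw [e1, e2, e3, e4, hg q p]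
    simp only [stressMatrix, Matrix.of_apply]
    split_ifs with h
    · subst h
      rw [← Finset.add_sum_erase _ _ (Finset.mem_univ p)]
      ring
    · ring
  linarith

/-- the augmented potential `Ṽ` is `C²` at every placement with pairwise
distinct node positions, and its Hessian there, as a `2N×2N` matrix in the coordinates
`(x, y)`, is `[[Ω̃(q) + L_c^x, L_c^xy],[L_c^xy, Ω̃(q) + L_c^y]]`, where `Ω̃(q)` is the
stress matrix of the effective stresses `ω̃_ij(q) = α_ij ω_ij (1 − l_ij/r_ij)` and the
`L`-matrices are built from `c_ij = α_ij ω_ij l_ij / r_ij³`. -/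
theorem augmented_potential_hessian
    {N : ℕ} (hN : 2 ≤ N)
    (ω α l : Fin N → Fin N → ℝ)
    (hωs : ∀ i j, ω i j = ω j i) (hαs : ∀ i j, α i j = α j i) (hls : ∀ i j, l i j = l j i)
    (hωd : ∀ i, ω i i = 0)
    (Vt : (Fin N → ℝ) × (Fin N → ℝ) → ℝ)
    (hVt : Vt = fun z => (1 / 2 : ℝ) * ∑ i : Fin N, ∑ j : Fin N, (if i < j then
        α i j * ω i j *
          (Real.sqrt ((z.1 i - z.1 j) ^ 2 + (z.2 i - z.2 j) ^ 2) - l i j) ^ 2 else 0))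
    (x y : Fin N → ℝ)
    (hdist : ∀ i j : Fin N, i ≠ j → (x i, y i) ≠ (x j, y j))
    (r : Fin N → Fin N → ℝ)
    (hr : ∀ i j, r i j = Real.sqrt ((x i - x j) ^ 2 + (y i - y j) ^ 2))
    (ωt : Fin N → Fin N → ℝ)
    (hωt : ∀ i j, ωt i j = α i j * ω i j * (1 - l i j / r i j))
    (c : Fin N → Fin N → ℝ)
    (hc : ∀ i j, c i j = α i j * ω i j * l i j / (r i j) ^ 3)
    (basis : Fin N ⊕ Fin N → (Fin N → ℝ) × (Fin N → ℝ))
    (hbasis : basis = Sum.elim (fun i => (Pi.single i 1, 0)) (fun i => (0, Pi.single i 1))) :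
    ContDiffAt ℝ 2 Vt (x, y) ∧
    ∀ a b : Fin N ⊕ Fin N,
      fderiv ℝ (fun z => fderiv ℝ Vt z (basis b)) (x, y) (basis a) =
        (Matrix.fromBlocks
          (stressMatrix ωt + Lmat c (fun i j => (x i - x j) ^ 2))
          (Lmat c (fun i j => (x i - x j) * (y i - y j)))
          (Lmat c (fun i j => (x i - x j) * (y i - y j)))
          (stressMatrix ωt + Lmat c (fun i j => (y i - y j) ^ 2))) a b := by
  classical
  let u : Fin N → Fin N → ((Fin N → ℝ) × (Fin N → ℝ)) →L[ℝ] ℝ := fun i j =>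
    (ContinuousLinearMap.proj (R := ℝ) (φ := fun _ : Fin N => ℝ) i
      - ContinuousLinearMap.proj (R := ℝ) (φ := fun _ : Fin N => ℝ) j).comp
      (ContinuousLinearMap.fst ℝ _ _)
  let v : Fin N → Fin N → ((Fin N → ℝ) × (Fin N → ℝ)) →L[ℝ] ℝ := fun i j =>
    (ContinuousLinearMap.proj (R := ℝ) (φ := fun _ : Fin N => ℝ) i
      - ContinuousLinearMap.proj (R := ℝ) (φ := fun _ : Fin N => ℝ) j).comp
      (ContinuousLinearMap.snd ℝ _ _)
  have hu : ∀ i j z, u i j z = z.1 i - z.1 j := fun _ _ _ => rfl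
  have hv : ∀ i j z, v i j z = z.2 i - z.2 j := fun _ _ _ => rfl
  have hV : Vt = fun z => (1 / 2 : ℝ) * ∑ i : Fin N, ∑ j : Fin N, (if i < j then
        α i j * ω i j * (Real.sqrt ((u i j z) ^ 2 + (v i j z) ^ 2) - l i j) ^ 2 else 0) := hVt
  have hne : ∀ i j, i < j → (u i j (x, y)) ^ 2 + (v i j (x, y)) ^ 2 ≠ 0 := by
    intro i j hij h
    apply hdist i j hij.ne
    simp only [hu, hv] at h
    have h1 : x i - x j = 0 := by nlinarith [sq_nonneg (x i - x j), sq_nonneg (y i - y j)]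
    have h2 : y i - y j = 0 := by nlinarith [sq_nonneg (x i - x j), sq_nonneg (y i - y j)]
    rw [Prod.mk.injEq]
    constructor <;> linarith
  have hev : ∀ᶠ z in nhds (x, y), ∀ i j, i < j → (u i j z) ^ 2 + (v i j z) ^ 2 ≠ 0 := by
    rw [Filter.eventually_all]; intro i
    rw [Filter.eventually_all]; intro j
    by_cases hij : i < j
    · have hcont : ContinuousAt (fun z => (u i j z) ^ 2 + (v i j z) ^ 2) (x, y) := by fun_prop
      filter_upwards [hcont.eventually_ne (hne i j hij)] with z hz _ using hz
    · exact Filter.Eventually.of_forall fun z h => absurd h hij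
  refine ⟨?_, ?_⟩
  · rw [hV]
    refine contDiffAt_const.mul (ContDiffAt.sum fun i _ => ContDiffAt.sum fun j _ => ?_)
    by_cases hij : i < j
    · simp only [hij, if_true]
      have hs : ContDiffAt ℝ 2 (fun z => (u i j z) ^ 2 + (v i j z) ^ 2) (x, y) :=
        ((u i j).contDiff.contDiffAt.pow 2).add ((v i j).contDiff.contDiffAt.pow 2)
      exact contDiffAt_const.mul (((hs.sqrt (hne i j hij)).sub contDiffAt_const).pow 2)
    · simp only [hij, if_false]
      exact contDiffAt_const
  have key : ∀ w w', fderiv ℝ (fun z => fderiv ℝ Vt z w) (x, y) w' =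
      ∑ i, ∑ j, (if i < j then α i j * ω i j *
        ((1 - l i j / r i j) * (u i j w * u i j w' + v i j w * v i j w') +
        (l i j / r i j ^ 3 * (u i j (x, y) * u i j w + v i j (x, y) * v i j w)) *
          (u i j (x, y) * u i j w' + v i j (x, y) * v i j w')) else 0) := by
    intro w w'
    have hfirst : (fun z => fderiv ℝ Vt z w) =ᶠ[nhds (x, y)] fun z =>
        ∑ i, ∑ j, (if i < j then α i j * ω i j *
          ((1 - l i j / Real.sqrt (u i j z ^ 2 + v i j z ^ 2)) *
            (u i j z * u i j w + v i j z * v i j w)) else 0) := by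
      filter_upwards [hev] with z hz
      have hd : HasFDerivAt Vt ((1 / 2 : ℝ) • ∑ i, ∑ j, (if i < j then (α i j * ω i j) •
          ((2 * (1 - l i j / Real.sqrt (u i j z ^ 2 + v i j z ^ 2))) •
            (u i j z • u i j + v i j z • v i j)) else 0)) z := by
        rw [hV]
        refine HasFDerivAt.const_mul (HasFDerivAt.fun_sum fun i _ => HasFDerivAt.fun_sum fun j _ => ?_) _
        by_cases hij : i < j
        · simp only [hij, if_true]
          exact (aux_first (u i j) (v i j) (l i j) z (hz i j hij)).const_mul _
        · simp only [hij, if_false]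
          exact hasFDerivAt_const _ _
      rw [hd.fderiv]
      simp only [_root_.smul_apply, _root_.sum_apply, smul_eq_mul,
        Finset.mul_sum]
      refine Finset.sum_congr rfl fun i _ => Finset.sum_congr rfl fun j _ => ?_
      split_ifs
      · simp only [_root_.smul_apply, _root_.add_apply, smul_eq_mul]
        ring
      · simp
    rw [hfirst.fderiv_eq]
    have hd : HasFDerivAt (fun z =>
        ∑ i, ∑ j, (if i < j then α i j * ω i j *
          ((1 - l i j / Real.sqrt (u i j z ^ 2 + v i j z ^ 2)) *
            (u i j z * u i j w + v i j z * v i j w)) else 0))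
        (∑ i, ∑ j, (if i < j then (α i j * ω i j) •
          ((1 - l i j / r i j) • (u i j w • u i j + v i j w • v i j) +
        (l i j / r i j ^ 3 * (u i j (x, y) * u i j w + v i j (x, y) * v i j w)) •
          (u i j (x, y) • u i j + v i j (x, y) • v i j)) else 0)) (x, y) := by
      refine HasFDerivAt.fun_sum fun i _ => HasFDerivAt.fun_sum fun j _ => ?_
      by_cases hij : i < j
      · simp only [hij, if_true, hr]
        exact (aux_second (u i j) (v i j) (l i j) (x, y) w (hne i j hij)).const_mul _
      · simp only [hij, if_false]
        exact hasFDerivAt_const _ _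
    rw [hd.fderiv]
    simp only [_root_.sum_apply]
    refine Finset.sum_congr rfl fun i _ => Finset.sum_congr rfl fun j _ => ?_
    split_ifs
    · simp only [_root_.smul_apply, _root_.add_apply, smul_eq_mul]
    · simp
  have hrs : ∀ i j, r i j = r j i := fun i j => by
    rw [hr, hr]; congr 1; ring
  have hωts : ∀ i j, ωt i j = ωt j i := fun i j => by
    rw [hωt, hωt, hαs, hωs, hls, hrs]
  have hcs : ∀ i j, c i j = c j i := fun i j => by
    rw [hc, hc, hαs, hωs, hls, hrs]
  have hL : ∀ g : Fin N → Fin N → ℝ, Lmat c g = stressMatrix (fun i j => c i j * g i j) :=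
    fun g => rfl
  have hA : ∀ g h : Fin N → Fin N → ℝ, stressMatrix g + stressMatrix h
      = stressMatrix (fun i j => g i j + h i j) := by
    intro g h
    ext i j
    simp only [stressMatrix, Matrix.add_apply, Matrix.of_apply]
    split_ifs
    · rw [Finset.sum_add_distrib]
    · ring
  intro a b
  rw [key, hL, hL, hL, hA, hA, hbasis]
  rcases a with p | p <;> rcases b with q | q <;>
    simp only [Matrix.fromBlocks_apply₁₁, Matrix.fromBlocks_apply₁₂, Matrix.fromBlocks_apply₂₁,
      Matrix.fromBlocks_apply₂₂, Sum.elim_inl, Sum.elim_inr] <;>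
    rw [← aux_sum _ (fun i j => by rw [hcs i j]; try rw [hωts i j]
                                   ring)] <;>
    refine Finset.sum_congr rfl fun i _ => Finset.sum_congr rfl fun j _ => ?_ <;>
    split_ifs <;>
    simp only [hu, hv, hωt, hc, Pi.zero_apply] <;>
    ring
end
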